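/- arXiv:1505.00386 — 8 statements merged into one kernel-verified Lean document; each statement's English description precedes it below -/
import Mathlib

section
/- Let G be a connected {K_{1,3}, Z_2, N}-free graph which contains as an induced subgraph a graph H = H_2({C_{t_3}, C_{t_4}}), where C_{t_3} and C_{t_4} are vertex-disjoint nonempty cliques. Then for each vertex a ∈ V(G) − V(H) with N_G(a) ∩ V(H) ≠ ∅, one of the following holds: (i) G[V(H) ∪ {a}] ∈ ℋ_2; (ii) for some i ∈ {3,4}, N_G(a) ∩ V(H) = {t_1, t_{i+2}} ∪ C_{t_i} and |C_{t_{7−i}}| = 1 (and then G[V(H) ∪ {a}] ∈ ℋ_5); or (iii) N_G(a) ∩ V(H) = {t_1, t_2, t_5, t_6} and |C_{t_3}| = |C_{t_4}| = 1 (and then G[V(H) ∪ {a}] ∈ ℋ_6). -/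
open SimpleGraph

def graphOfList (n : ℕ) (E : List (Fin n × Fin n)) : SimpleGraph (Fin n) :=
  SimpleGraph.fromRel (fun a b => (a, b) ∈ E)

/-- The claw `K_{1,3}`, with center `0`. -/
def K13 : SimpleGraph (Fin 4) := graphOfList 4 [(0,1), (0,2), (0,3)]

/-- `Z_k = N_{k,0,0}`: a triangle `0,1,2` together with a path of length `k`
attached at the vertex `2`. -/
def Zgraph (k : ℕ) : SimpleGraph (Fin (k + 3)) :=
  SimpleGraph.fromRel (fun a b =>
    (a.val = 0 ∧ b.val = 1) ∨ (a.val = 0 ∧ b.val = 2) ∨ (a.val = 1 ∧ b.val = 2) ∨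
    (2 ≤ a.val ∧ b.val = a.val + 1))

/-- The net `N = N_{1,1,1}`: a triangle `0,1,2` with pendant vertices `3,4,5`
attached to `0,1,2` respectively. -/
def Ngraph : SimpleGraph (Fin 6) :=
  graphOfList 6 [(0,1), (0,2), (1,2), (0,3), (1,4), (2,5)]

/-- `G` contains `H` as an induced subgraph. -/
def ContainsInduced {V W : Type*} (G : SimpleGraph V) (H : SimpleGraph W) : Prop :=
  Nonempty (H ↪g G)

/-- The graph `H₁ ≅ B_{1,1}` with vertices `s₁,…,s₅` encoded as `0,…,4`;
its expandable vertices are `s₃,s₄,s₅`, i.e. `{2,3,4}`. -/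
def HGraph1 : SimpleGraph (Fin 5) :=
  graphOfList 5 [(0,2), (1,3), (2,3), (2,4), (3,4)]

/-- The graph `H₂` with vertices `t₁,…,t₆` encoded as `0,…,5`;
its expandable vertices are `t₃,t₄`, i.e. `{2,3}`. -/
def HGraph2 : SimpleGraph (Fin 6) :=
  graphOfList 6 [(0,1), (1,2), (1,3), (2,3), (2,4), (3,5), (4,5)]

/-- The graph `H₃` with vertices `u₁,…,u₆` encoded as `0,…,5`;
its expandable vertex is `u₆`, i.e. `{5}`. -/
def HGraph3 : SimpleGraph (Fin 6) :=
  graphOfList 6 [(0,1), (0,2), (1,3), (1,5), (2,4), (2,5), (3,5), (4,5)]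

/-- The graph `H₄` with vertices `v₁,…,v₆` encoded as `0,…,5`;
its expandable vertices are `v₄,v₅,v₆`, i.e. `{3,4,5}`. -/
def HGraph4 : SimpleGraph (Fin 6) :=
  graphOfList 6 [(0,1), (0,5), (1,4), (2,4), (2,5), (3,4), (3,5), (4,5)]

/-- The graph `H₅` with vertices `w₁,…,w₇` encoded as `0,…,6`: the 6-cycle
`w₁w₃w₄w₂w₆w₅w₁` together with `w₇` adjacent to exactly `w₃,w₄,w₅,w₆`;
its expandable vertex is `w₇`, i.e. `{6}`. -/
def HGraph5 : SimpleGraph (Fin 7) :=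
  graphOfList 7 [(0,2), (2,3), (3,1), (1,5), (5,4), (4,0), (6,2), (6,3), (6,4), (6,5)]

/-- The graph `H₆` with vertices `x₁,…,x₇` encoded as `0,…,6`. -/
def HGraph6 : SimpleGraph (Fin 7) :=
  graphOfList 7 [(0,1), (0,2), (0,4), (1,3), (1,5), (2,3), (2,4), (3,5), (4,5), (4,6), (5,6)]

/-- The graph `H₇` with vertices `y₁,…,y₈` encoded as `0,…,7`. -/
def HGraph7 : SimpleGraph (Fin 8) :=
  graphOfList 8 [(0,1), (0,2), (0,4), (1,3), (1,5), (2,3), (2,4), (2,6), (3,5), (3,6),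
    (4,5), (4,7), (5,7), (6,7)]

/-- `G` is obtained (up to isomorphism) from the graph `H` (on `Fin n`) by expanding each
vertex in `U` to a nonempty clique, vertices outside `U` being kept as single vertices.
The map `g` sends each vertex of `G` to the vertex of `H` it arises from: fibers are the
expansion cliques, fibers over non-expandable vertices are singletons, and two distinct
vertices of `G` are adjacent iff they lie in the same fiber or their images are adjacent
in `H`.  (For `U = ∅` this says exactly that `G` is isomorphic to `H`.) -/
def IsExpansionOf {V : Type*} (G : SimpleGraph V) {n : ℕ} (H : SimpleGraph (Fin n))
    (U : Set (Fin n)) : Prop :=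
  ∃ g : V → Fin n, Function.Surjective g ∧
    (∀ i : Fin n, i ∉ U → ∀ u v : V, g u = i → g v = i → u = v) ∧
    (∀ u v : V, G.Adj u v ↔ ((g u = g v ∧ u ≠ v) ∨ H.Adj (g u) (g v)))


theorem aux_claw {V : Type*} {G : SimpleGraph V} (h : ¬ ContainsInduced G K13) (x0 x1 x2 x3 : V)
    (h01 : G.Adj x0 x1) (h02 : G.Adj x0 x2) (h03 : G.Adj x0 x3)
    (h12 : ¬ G.Adj x1 x2) (h13 : ¬ G.Adj x1 x3) (h23 : ¬ G.Adj x2 x3)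
    (n12 : x1 ≠ x2) (n13 : x1 ≠ x3) (n23 : x2 ≠ x3) : False := by
  apply h
  have n01 := h01.ne
  have n02 := h02.ne
  have n03 := h03.ne
  refine ⟨⟨⟨![x0, x1, x2, x3], ?_⟩, ?_⟩⟩
  · intro i j hij
    fin_cases i <;> fin_cases j <;> simp_all
  · intro i j
    change G.Adj (![x0, x1, x2, x3] i) (![x0, x1, x2, x3] j) ↔ _
    have k12 : ¬ G.Adj x2 x1 := fun h => h12 h.symm
    have k13 : ¬ G.Adj x3 x1 := fun h => h13 h.symm
    have k23 : ¬ G.Adj x3 x2 := fun h => h23 h.symm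
    fin_cases i <;> fin_cases j <;>
      simp [K13, graphOfList, SimpleGraph.fromRel_adj, h01, h02, h03, h01.symm, h02.symm,
        h03.symm, h12, h13, h23, k12, k13, k23]

theorem aux_zz {V : Type*} {G : SimpleGraph V} (h : ¬ ContainsInduced G (Zgraph 2))
    (x0 x1 x2 x3 x4 : V)
    (h01 : G.Adj x0 x1) (h02 : G.Adj x0 x2) (h12 : G.Adj x1 x2) (h23 : G.Adj x2 x3)
    (h34 : G.Adj x3 x4)
    (h03 : ¬ G.Adj x0 x3) (h04 : ¬ G.Adj x0 x4) (h13 : ¬ G.Adj x1 x3) (h14 : ¬ G.Adj x1 x4)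
    (h24 : ¬ G.Adj x2 x4) : False := by
  apply h
  have n01 := h01.ne
  have n02 := h02.ne
  have n12 := h12.ne
  have n23 := h23.ne
  have n34 := h34.ne
  have n03 : x0 ≠ x3 := by rintro rfl; exact h04 h34
  have n04 : x0 ≠ x4 := by rintro rfl; exact h14 h01.symm
  have n13 : x1 ≠ x3 := by rintro rfl; exact h14 h34
  have n14 : x1 ≠ x4 := by rintro rfl; exact h04 h01
  have n24 : x2 ≠ x4 := by rintro rfl; exact h04 h02
  refine ⟨⟨⟨![x0, x1, x2, x3, x4], ?_⟩, ?_⟩⟩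
  · intro i j hij
    fin_cases i <;> fin_cases j <;> simp_all
  · intro i j
    change G.Adj (![x0, x1, x2, x3, x4] i) (![x0, x1, x2, x3, x4] j) ↔ _
    have k03 : ¬ G.Adj x3 x0 := fun h => h03 h.symm
    have k04 : ¬ G.Adj x4 x0 := fun h => h04 h.symm
    have k13 : ¬ G.Adj x3 x1 := fun h => h13 h.symm
    have k14 : ¬ G.Adj x4 x1 := fun h => h14 h.symm
    have k24 : ¬ G.Adj x4 x2 := fun h => h24 h.symm
    fin_cases i <;> fin_cases j <;>
      simp [Zgraph, SimpleGraph.fromRel_adj, h01, h02, h12, h23, h34, h01.symm, h02.symm,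
        h12.symm, h23.symm, h34.symm, h03, h04, h13, h14, h24, k03, k04, k13, k14, k24]

theorem aux_exp {V : Type*} (G : SimpleGraph V) (S : Set V) (a : V) (ha : a ∉ S) {n m : ℕ}
    (H : SimpleGraph (Fin n)) (H' : SimpleGraph (Fin m)) (U : Set (Fin m)) (φ : V → Fin n)
    (hs : ∀ i, ∃ x ∈ S, φ x = i)
    (hadj : ∀ u ∈ S, ∀ v ∈ S, G.Adj u v ↔ ((φ u = φ v ∧ u ≠ v) ∨ H.Adj (φ u) (φ v)))
    (ρ : Fin n → Fin m) (k : Fin m) (hinj : ∀ i j, ρ i = ρ j → i = j)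
    (hH : ∀ i j, H.Adj i j ↔ H'.Adj (ρ i) (ρ j))
    (hcov : ∀ j, j = k ∨ ∃ i, ρ i = j)
    (haS : ∀ x ∈ S, G.Adj a x ↔ (ρ (φ x) = k ∨ H'.Adj k (ρ (φ x))))
    (hk : k ∉ U → ∀ i, ρ i ≠ k)
    (hfib : ∀ i, ρ i ∉ U → ∀ u ∈ S, ∀ v ∈ S, φ u = i → φ v = i → u = v) :
    IsExpansionOf (G.induce (S ∪ {a})) H' U := by
  classical
  have hg : ∀ x ∈ S, (if x = a then k else ρ (φ x)) = ρ (φ x) := by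
    intro x hx
    rw [if_neg]
    rintro rfl
    exact ha hx
  refine ⟨fun x => if x.1 = a then k else ρ (φ x.1), ?_, ?_, ?_⟩
  · intro j
    rcases hcov j with rfl | ⟨i, rfl⟩
    · exact ⟨⟨a, by simp⟩, by simp⟩
    · obtain ⟨x, hx, rfl⟩ := hs i
      exact ⟨⟨x, Or.inl hx⟩, hg x hx⟩
  · rintro j hj ⟨u, hu⟩ ⟨v, hv⟩ h1 h2
    apply Subtype.ext
    simp only at h1 h2 ⊢
    rcases hu with hu | hu <;> rcases hv with hv | hv
    · rw [hg u hu] at h1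
      rw [hg v hv] at h2
      exact hfib (φ u) (h1 ▸ hj) u hu v hv rfl (hinj _ _ (h2.trans h1.symm))
    · rw [hg u hu] at h1
      rw [if_pos (Set.mem_singleton_iff.1 hv)] at h2
      subst h2
      exact absurd h1 (hk hj _)
    · rw [hg v hv] at h2
      rw [if_pos (Set.mem_singleton_iff.1 hu)] at h1
      subst h1
      exact absurd h2 (hk hj _)
    · rw [hu, hv]
  · rintro ⟨u, hu⟩ ⟨v, hv⟩
    simp only [SimpleGraph.comap_adj, Function.Embedding.subtype_apply, ne_eq, Subtype.mk.injEq]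
    rcases hu with hu | hu <;> rcases hv with hv | hv
    · rw [hg u hu, hg v hv, hadj u hu v hv, hH]
      have : ρ (φ u) = ρ (φ v) ↔ φ u = φ v := ⟨hinj _ _, fun h => by rw [h]⟩
      rw [this]
    · rw [hg u hu, if_pos (Set.mem_singleton_iff.1 hv), Set.mem_singleton_iff.1 hv, G.adj_comm, haS u hu, H'.adj_comm]
      have : u ≠ a := by rintro rfl; exact ha hu
      simp [this]
    · rw [hg v hv, if_pos (Set.mem_singleton_iff.1 hu), Set.mem_singleton_iff.1 hu, haS v hv]
      have : a ≠ v := by rintro rfl; exact ha hv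
      simp [this, eq_comm]
    · rw [if_pos (Set.mem_singleton_iff.1 hu), if_pos (Set.mem_singleton_iff.1 hv), Set.mem_singleton_iff.1 hv, Set.mem_singleton_iff.1 hu]
      simp

theorem aux_iso {V : Type*} (G : SimpleGraph V) {n : ℕ} (H : SimpleGraph (Fin n))
    (h : IsExpansionOf G H ∅) : Nonempty (G ≃g H) := by
  obtain ⟨g, hs, hi, ha⟩ := h
  have inj : Function.Injective g := fun u v h => hi (g v) (by simp) u v h rfl
  refine ⟨⟨Equiv.ofBijective g ⟨inj, hs⟩, ?_⟩⟩
  intro u v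
  change H.Adj (g u) (g v) ↔ G.Adj u v
  rw [ha]
  constructor
  · exact Or.inr
  · rintro (⟨h, h'⟩ | h)
    · exact absurd (inj h) h'
    · exact h

set_option maxHeartbeats 4000000 in
/-- **Lemma 2.3 (Statement 6).** Let `G` be a connected `{K_{1,3}, Z₂, N}`-free graph
containing an induced subgraph `H = H₂({C_{t₃}, C_{t₄}})`, where `D3, D4` are
vertex-disjoint nonempty cliques playing the roles of `C_{t₃}, C_{t₄}` (here
`V(H) = {t₁, t₂, t₅, t₆} ∪ D3 ∪ D4`, with the adjacency of the expansion of `H₂`).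
Then for each vertex `a ∈ V(G) − V(H)` with `N_G(a) ∩ V(H) ≠ ∅` one of the conclusions
(i)–(iii) holds. -/
theorem stmt6 {V : Type*} [Fintype V] (G : SimpleGraph V) (hconn : G.Connected)
    (hK13 : ¬ ContainsInduced G K13) (hZ2 : ¬ ContainsInduced G (Zgraph 2))
    (hN : ¬ ContainsInduced G Ngraph)
    (t1 t2 t5 t6 : V) (D3 D4 : Set V)
    (hts : List.Pairwise (· ≠ ·) [t1, t2, t5, t6])
    (hne3 : D3.Nonempty) (hne4 : D4.Nonempty) (hd34 : Disjoint D3 D4)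
    (ht1 : t1 ∉ D3 ∪ D4) (ht2 : t2 ∉ D3 ∪ D4) (ht5 : t5 ∉ D3 ∪ D4) (ht6 : t6 ∉ D3 ∪ D4)
    (hind : ∀ u ∈ ({t1, t2, t5, t6} ∪ D3 ∪ D4 : Set V),
      ∀ v ∈ ({t1, t2, t5, t6} ∪ D3 ∪ D4 : Set V), u ≠ v →
      (G.Adj u v ↔
        (u = t1 ∧ v = t2) ∨ (v = t1 ∧ u = t2) ∨
        (u = t2 ∧ v ∈ D3) ∨ (v = t2 ∧ u ∈ D3) ∨
        (u = t2 ∧ v ∈ D4) ∨ (v = t2 ∧ u ∈ D4) ∨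
        (u ∈ D3 ∧ v ∈ D3) ∨ (u ∈ D4 ∧ v ∈ D4) ∨
        (u ∈ D3 ∧ v ∈ D4) ∨ (u ∈ D4 ∧ v ∈ D3) ∨
        (u ∈ D3 ∧ v = t5) ∨ (v ∈ D3 ∧ u = t5) ∨
        (u ∈ D4 ∧ v = t6) ∨ (v ∈ D4 ∧ u = t6) ∨
        (u = t5 ∧ v = t6) ∨ (v = t5 ∧ u = t6)))
    (a : V) (ha : a ∉ ({t1, t2, t5, t6} ∪ D3 ∪ D4 : Set V))
    (hnbr : ∃ b ∈ ({t1, t2, t5, t6} ∪ D3 ∪ D4 : Set V), G.Adj a b) :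
    -- (i)
    IsExpansionOf (G.induce (({t1, t2, t5, t6} ∪ D3 ∪ D4 : Set V) ∪ {a})) HGraph2 {2, 3} ∨
    -- (ii), i = 3
    ((∀ x ∈ ({t1, t2, t5, t6} ∪ D3 ∪ D4 : Set V), G.Adj a x ↔ (x = t1 ∨ x = t5 ∨ x ∈ D3)) ∧
      (∃ c, D4 = {c}) ∧
      IsExpansionOf (G.induce (({t1, t2, t5, t6} ∪ D3 ∪ D4 : Set V) ∪ {a})) HGraph5 {6}) ∨
    -- (ii), i = 4
    ((∀ x ∈ ({t1, t2, t5, t6} ∪ D3 ∪ D4 : Set V), G.Adj a x ↔ (x = t1 ∨ x = t6 ∨ x ∈ D4)) ∧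
      (∃ c, D3 = {c}) ∧
      IsExpansionOf (G.induce (({t1, t2, t5, t6} ∪ D3 ∪ D4 : Set V) ∪ {a})) HGraph5 {6}) ∨
    -- (iii)
    ((∀ x ∈ ({t1, t2, t5, t6} ∪ D3 ∪ D4 : Set V),
        G.Adj a x ↔ (x = t1 ∨ x = t2 ∨ x = t5 ∨ x = t6)) ∧
      (∃ c, D3 = {c}) ∧ (∃ c, D4 = {c}) ∧
      Nonempty ((G.induce (({t1, t2, t5, t6} ∪ D3 ∪ D4 : Set V) ∪ {a})) ≃g HGraph6)) := by
  classical
  set S : Set V := {t1, t2, t5, t6} ∪ D3 ∪ D4 with hS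
  have m1 : t1 ∈ S := by simp [hS]
  have m2 : t2 ∈ S := by simp [hS]
  have m5 : t5 ∈ S := by simp [hS]
  have m6 : t6 ∈ S := by simp [hS]
  have m3 : ∀ c ∈ D3, c ∈ S := fun c hc => by simp [hS, hc]
  have m4 : ∀ c ∈ D4, c ∈ S := fun c hc => by simp [hS, hc]
  have hd : ∀ c ∈ D3, c ∉ D4 := fun c h3 h4 => Set.disjoint_left.1 hd34 h3 h4
  simp only [Set.mem_union, not_or] at ht1 ht2 ht5 ht6
  obtain ⟨p13, p14⟩ := ht1
  obtain ⟨p23, p24⟩ := ht2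
  obtain ⟨p53, p54⟩ := ht5
  obtain ⟨p63, p64⟩ := ht6
  simp only [List.pairwise_cons, List.mem_cons, List.not_mem_nil, or_false, forall_eq_or_imp,
    forall_eq, List.Pairwise.nil, and_true, false_imp_iff, implies_true] at hts
  obtain ⟨⟨n12, n15, n16⟩, ⟨n25, n26⟩, n56⟩ := hts
  obtain ⟨φ, f1, f2, f5, f6, f3, f4⟩ : ∃ φ : V → Fin 6, φ t1 = 0 ∧ φ t2 = 1 ∧ φ t5 = 4 ∧
      φ t6 = 5 ∧ (∀ c ∈ D3, φ c = 2) ∧ (∀ c ∈ D4, φ c = 3) := by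
    refine ⟨fun x => if x = t1 then 0 else if x = t2 then 1 else if x = t5 then 4 else
      if x = t6 then 5 else if x ∈ D3 then 2 else 3, ?_, ?_, ?_, ?_, ?_, ?_⟩
    · simp
    · simp [n12.symm]
    · simp [n15.symm, n25.symm]
    · simp [n16.symm, n26.symm, n56.symm]
    · intro c hc
      grind
    · intro c hc
      grind
  have hcase : ∀ x ∈ S, x = t1 ∨ x = t2 ∨ x = t5 ∨ x = t6 ∨ x ∈ D3 ∨ x ∈ D4 := by
    intro x hx
    simp only [hS, Set.mem_union, Set.mem_insert_iff, Set.mem_singleton_iff] at hx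
    tauto
  have hsurj : ∀ i, ∃ x ∈ S, φ x = i := by
    obtain ⟨c, hc⟩ := hne3
    obtain ⟨d, hd⟩ := hne4
    intro i
    fin_cases i
    · exact ⟨t1, m1, f1⟩
    · exact ⟨t2, m2, f2⟩
    · exact ⟨c, m3 c hc, f3 c hc⟩
    · exact ⟨d, m4 d hd, f4 d hd⟩
    · exact ⟨t5, m5, f5⟩
    · exact ⟨t6, m6, f6⟩
  have hdec : ∀ i j : Fin 6, HGraph2.Adj i j ↔ (i, j) ∈ [((0 : Fin 6), (1 : Fin 6)), (1,2), (1,3),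
      (2,3), (2,4), (3,5), (4,5), (1,0), (2,1), (3,1), (3,2), (4,2), (5,3), (5,4)] := by
    intro i j
    fin_cases i <;> fin_cases j <;> simp [HGraph2, graphOfList, SimpleGraph.fromRel_adj]
  have q : ∀ x ∈ S, (x = t1 ↔ φ x = 0) ∧ (x = t2 ↔ φ x = 1) ∧ (x = t5 ↔ φ x = 4) ∧
      (x = t6 ↔ φ x = 5) ∧ (x ∈ D3 ↔ φ x = 2) ∧ (x ∈ D4 ↔ φ x = 3) := by
    intro x hx
    clear hind hsurj hnbr hdec
    rcases hcase x hx with h | h | h | h | h | h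
    · subst h; simp [f1, n12, n15, n16, p13, p14]
    · subst h; simp [f2, n12.symm, n25, n26, p23, p24]
    · subst h; simp [f5, n15.symm, n25.symm, n56, p53, p54]
    · subst h; simp [f6, n16.symm, n26.symm, n56.symm, p63, p64]
    · have r1 : x ≠ t1 := by rintro rfl; exact p13 h
      have r2 : x ≠ t2 := by rintro rfl; exact p23 h
      have r5 : x ≠ t5 := by rintro rfl; exact p53 h
      have r6 : x ≠ t6 := by rintro rfl; exact p63 h
      simp [f3 x h, r1, r2, r5, r6, h, hd x h]
    · have r1 : x ≠ t1 := by rintro rfl; exact p14 h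
      have r2 : x ≠ t2 := by rintro rfl; exact p24 h
      have r5 : x ≠ t5 := by rintro rfl; exact p54 h
      have r6 : x ≠ t6 := by rintro rfl; exact p64 h
      have r3 : x ∉ D3 := fun h' => hd x h' h
      simp [f4 x h, r1, r2, r5, r6, h, r3]
  have hfib : ∀ i : Fin 6, i ≠ 2 → i ≠ 3 → ∀ u ∈ S, ∀ v ∈ S, φ u = i → φ v = i → u = v := by
    intro i h2 h3 u hu v hv h h'
    obtain ⟨a1, a2, a3, a4, -, -⟩ := q u hu
    obtain ⟨b1, b2, b3, b4, -, -⟩ := q v hv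
    rw [h] at a1 a2 a3 a4
    rw [h'] at b1 b2 b3 b4
    have hi : i = 0 ∨ i = 1 ∨ i = 4 ∨ i = 5 := by
      clear * - h2 h3
      revert i
      decide
    rcases hi with hi | hi | hi | hi
    · rw [a1.2 hi, b1.2 hi]
    · rw [a2.2 hi, b2.2 hi]
    · rw [a3.2 hi, b3.2 hi]
    · rw [a4.2 hi, b4.2 hi]
  have hadj : ∀ u ∈ S, ∀ v ∈ S, G.Adj u v ↔
      ((φ u = φ v ∧ u ≠ v) ∨ HGraph2.Adj (φ u) (φ v)) := by
    intro u hu v hv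
    by_cases huv : u = v
    · subst huv
      simp
    have hc : φ u = φ v → φ u = 2 ∨ φ u = 3 := by
      intro h
      by_contra hcon
      rw [not_or] at hcon
      exact huv (hfib _ hcon.1 hcon.2 u hu v hv rfl h.symm)
    rw [hind u hu v hv huv]
    obtain ⟨a1, a2, a3, a4, a5, a6⟩ := q u hu
    obtain ⟨b1, b2, b3, b4, b5, b6⟩ := q v hv
    rw [a1, a2, a3, a4, a5, a6, b1, b2, b3, b4, b5, b6, hdec]
    simp only [ne_eq, huv, not_false_eq_true, and_true]
    generalize φ u = i at hc
    generalize φ v = j at hc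
    clear * - hc
    revert i j
    decide
  have na : ∀ x ∈ S, x ≠ a := by
    rintro x hx rfl
    exact ha hx
  have yes : ∀ u ∈ S, ∀ v ∈ S, HGraph2.Adj (φ u) (φ v) → G.Adj u v := by
    intro u hu v hv h
    exact (hadj u hu v hv).2 (Or.inr h)
  have no : ∀ u ∈ S, ∀ v ∈ S, φ u ≠ φ v → ¬ HGraph2.Adj (φ u) (φ v) → ¬ G.Adj u v := by
    intro u hu v hv h1 h2 h
    rcases (hadj u hu v hv).1 h with h | h
    · exact h1 h.1
    · exact h2 h
  have key : ∀ c ∈ D3, ∀ d ∈ D4,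
      (¬ G.Adj a t1 ∧ ¬ G.Adj a t2 ∧ ¬ G.Adj a c ∧ ¬ G.Adj a d ∧ ¬ G.Adj a t5 ∧ ¬ G.Adj a t6) ∨
      (¬ G.Adj a t1 ∧ G.Adj a t2 ∧ G.Adj a c ∧ G.Adj a d ∧ G.Adj a t5 ∧ ¬ G.Adj a t6) ∨
      (¬ G.Adj a t1 ∧ G.Adj a t2 ∧ G.Adj a c ∧ G.Adj a d ∧ ¬ G.Adj a t5 ∧ G.Adj a t6) ∨
      (G.Adj a t1 ∧ ¬ G.Adj a t2 ∧ G.Adj a c ∧ ¬ G.Adj a d ∧ G.Adj a t5 ∧ ¬ G.Adj a t6) ∨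
      (G.Adj a t1 ∧ ¬ G.Adj a t2 ∧ ¬ G.Adj a c ∧ G.Adj a d ∧ ¬ G.Adj a t5 ∧ G.Adj a t6) ∨
      (G.Adj a t1 ∧ G.Adj a t2 ∧ ¬ G.Adj a c ∧ ¬ G.Adj a d ∧ G.Adj a t5 ∧ G.Adj a t6) := by
    intro c hc d hd4
    have n1 := na _ m1
    have n2 := na _ m2
    have nc := na _ (m3 c hc)
    have nd := na _ (m4 d hd4)
    have n5 := na _ m5
    have n6 := na _ m6
    have e12 : G.Adj t1 t2 := yes _ m1 _ m2 (by rw [f1, f2, hdec]; decide)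
    have n12 : t1 ≠ t2 := fun h => by
      have := congrArg φ h
      rw [f1, f2] at this
      exact absurd this (by decide)
    have e1c : ¬ G.Adj t1 c := no _ m1 _ (m3 c hc) (by rw [f1, f3 c hc]; decide) (by rw [f1, f3 c hc, hdec]; decide)
    have n1c : t1 ≠ c := fun h => by
      have := congrArg φ h
      rw [f1, f3 c hc] at this
      exact absurd this (by decide)
    have e1d : ¬ G.Adj t1 d := no _ m1 _ (m4 d hd4) (by rw [f1, f4 d hd4]; decide) (by rw [f1, f4 d hd4, hdec]; decide)
    have n1d : t1 ≠ d := fun h => by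
      have := congrArg φ h
      rw [f1, f4 d hd4] at this
      exact absurd this (by decide)
    have e15 : ¬ G.Adj t1 t5 := no _ m1 _ m5 (by rw [f1, f5]; decide) (by rw [f1, f5, hdec]; decide)
    have n15 : t1 ≠ t5 := fun h => by
      have := congrArg φ h
      rw [f1, f5] at this
      exact absurd this (by decide)
    have e16 : ¬ G.Adj t1 t6 := no _ m1 _ m6 (by rw [f1, f6]; decide) (by rw [f1, f6, hdec]; decide)
    have n16 : t1 ≠ t6 := fun h => by
      have := congrArg φ h
      rw [f1, f6] at this
      exact absurd this (by decide)
    have e2c : G.Adj t2 c := yes _ m2 _ (m3 c hc) (by rw [f2, f3 c hc, hdec]; decide)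
    have n2c : t2 ≠ c := fun h => by
      have := congrArg φ h
      rw [f2, f3 c hc] at this
      exact absurd this (by decide)
    have e2d : G.Adj t2 d := yes _ m2 _ (m4 d hd4) (by rw [f2, f4 d hd4, hdec]; decide)
    have n2d : t2 ≠ d := fun h => by
      have := congrArg φ h
      rw [f2, f4 d hd4] at this
      exact absurd this (by decide)
    have e25 : ¬ G.Adj t2 t5 := no _ m2 _ m5 (by rw [f2, f5]; decide) (by rw [f2, f5, hdec]; decide)
    have n25 : t2 ≠ t5 := fun h => by
      have := congrArg φ h
      rw [f2, f5] at this
      exact absurd this (by decide)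
    have e26 : ¬ G.Adj t2 t6 := no _ m2 _ m6 (by rw [f2, f6]; decide) (by rw [f2, f6, hdec]; decide)
    have n26 : t2 ≠ t6 := fun h => by
      have := congrArg φ h
      rw [f2, f6] at this
      exact absurd this (by decide)
    have ecd : G.Adj c d := yes _ (m3 c hc) _ (m4 d hd4) (by rw [f3 c hc, f4 d hd4, hdec]; decide)
    have ncd : c ≠ d := fun h => by
      have := congrArg φ h
      rw [f3 c hc, f4 d hd4] at this
      exact absurd this (by decide)
    have ec5 : G.Adj c t5 := yes _ (m3 c hc) _ m5 (by rw [f3 c hc, f5, hdec]; decide)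
    have nc5 : c ≠ t5 := fun h => by
      have := congrArg φ h
      rw [f3 c hc, f5] at this
      exact absurd this (by decide)
    have ec6 : ¬ G.Adj c t6 := no _ (m3 c hc) _ m6 (by rw [f3 c hc, f6]; decide) (by rw [f3 c hc, f6, hdec]; decide)
    have nc6 : c ≠ t6 := fun h => by
      have := congrArg φ h
      rw [f3 c hc, f6] at this
      exact absurd this (by decide)
    have ed5 : ¬ G.Adj d t5 := no _ (m4 d hd4) _ m5 (by rw [f4 d hd4, f5]; decide) (by rw [f4 d hd4, f5, hdec]; decide)
    have nd5 : d ≠ t5 := fun h => by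
      have := congrArg φ h
      rw [f4 d hd4, f5] at this
      exact absurd this (by decide)
    have ed6 : G.Adj d t6 := yes _ (m4 d hd4) _ m6 (by rw [f4 d hd4, f6, hdec]; decide)
    have nd6 : d ≠ t6 := fun h => by
      have := congrArg φ h
      rw [f4 d hd4, f6] at this
      exact absurd this (by decide)
    have e56 : G.Adj t5 t6 := yes _ m5 _ m6 (by rw [f5, f6, hdec]; decide)
    have n56 : t5 ≠ t6 := fun h => by
      have := congrArg φ h
      rw [f5, f6] at this
      exact absurd this (by decide)
    have c0 : G.Adj a t2 → ¬ G.Adj a t1 → ¬ G.Adj a c → False := fun h2 h1 hc =>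
      aux_claw hK13 t2 t1 c a e12.symm e2c h2.symm e1c (fun h => h1 h.symm) (fun h => hc h.symm) n1c n1 nc
    have c1 : G.Adj a c → ¬ G.Adj a t2 → ¬ G.Adj a t5 → False := fun hc h2 h5 =>
      aux_claw hK13 c t2 t5 a e2c.symm ec5 hc.symm e25 (fun h => h2 h.symm) (fun h => h5 h.symm) n25 n2 n5
    have c2 : G.Adj a t1 → G.Adj a d → G.Adj a t5 → False := fun h1 hd h5 =>
      aux_claw hK13 a t1 d t5 h1 hd h5 e1d e15 ed5 n1d n15 nd5
    have c3 : G.Adj a t6 → ¬ G.Adj a d → ¬ G.Adj a t5 → False := fun h6 hd h5 =>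
      aux_claw hK13 t6 d t5 a ed6.symm e56.symm h6.symm ed5 (fun h => hd h.symm) (fun h => h5 h.symm) nd5 nd n5
    have c4 : G.Adj a d → ¬ G.Adj a t2 → ¬ G.Adj a t6 → False := fun hd h2 h6 =>
      aux_claw hK13 d t2 t6 a e2d.symm ed6 hd.symm e26 (fun h => h2 h.symm) (fun h => h6 h.symm) n26 n2 n6
    have c5 : G.Adj a t1 → G.Adj a t2 → ¬ G.Adj a d → ¬ G.Adj a t6 → False := fun h1 h2 hd h6 =>
      aux_zz hZ2 t1 a t2 d t6 h1.symm e12 h2 e2d ed6 e1d e16 hd h6 e26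
    have c6 : G.Adj a t5 → ¬ G.Adj a t2 → ¬ G.Adj a d → ¬ G.Adj a c → False := fun h5 h2 hd hc =>
      aux_zz hZ2 t2 d c t5 a e2d e2c ecd.symm ec5 h5.symm e25 (fun h => h2 h.symm) ed5 (fun h => hd h.symm) (fun h => hc h.symm)
    have c7 : G.Adj a t2 → ¬ G.Adj a t1 → ¬ G.Adj a d → False := fun h2 h1 hd =>
      aux_claw hK13 t2 t1 d a e12.symm e2d h2.symm e1d (fun h => h1 h.symm) (fun h => hd h.symm) n1d n1 nd
    have c8 : G.Adj a t1 → G.Adj a c → G.Adj a t6 → False := fun h1 hc h6 =>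
      aux_claw hK13 a t1 c t6 h1 hc h6 e1c e16 ec6 n1c n16 nc6
    have c9 : G.Adj a t2 → G.Adj a d → ¬ G.Adj a t6 → ¬ G.Adj a t5 → False := fun h2 hd h6 h5 =>
      aux_zz hZ2 t2 a d t6 t5 h2.symm e2d hd ed6 e56.symm e26 e25 h6 h5 ed5
    have c10 : G.Adj a t5 → G.Adj a c → ¬ G.Adj a t2 → ¬ G.Adj a t1 → False := fun h5 hc h2 h1 =>
      aux_zz hZ2 t5 a c t2 t1 h5.symm ec5.symm hc e2c.symm e12.symm (fun h => e25 h.symm) (fun h => e15 h.symm) h2 h1 (fun h => e1c h.symm)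
    have c11 : G.Adj a t6 → G.Adj a d → ¬ G.Adj a t2 → ¬ G.Adj a t1 → False := fun h6 hd h2 h1 =>
      aux_zz hZ2 t6 a d t2 t1 h6.symm ed6.symm hd e2d.symm e12.symm (fun h => e26 h.symm) (fun h => e16 h.symm) h2 h1 (fun h => e1d h.symm)
    have c12 : G.Adj a t1 → G.Adj a t2 → G.Adj a t6 → ¬ G.Adj a t5 → False := fun h1 h2 h6 h5 =>
      aux_zz hZ2 t1 t2 a t6 t5 e12 h1.symm h2.symm h6 e56.symm e16 e15 e26 e25 h5
    have c13 : G.Adj a t1 → ¬ G.Adj a c → ¬ G.Adj a d → ¬ G.Adj a t2 → False := fun h1 hc hd h2 =>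
      aux_zz hZ2 c d t2 t1 a ecd e2c.symm e2d.symm e12.symm h1.symm (fun h => e1c h.symm) (fun h => hc h.symm) (fun h => e1d h.symm) (fun h => hd h.symm) (fun h => h2 h.symm)
    have c14 : G.Adj a t5 → G.Adj a t6 → G.Adj a t2 → ¬ G.Adj a t1 → False := fun h5 h6 h2 h1 =>
      aux_zz hZ2 t5 t6 a t2 t1 e56 h5.symm h6.symm h2 e12.symm (fun h => e25 h.symm) (fun h => e15 h.symm) (fun h => e26 h.symm) (fun h => e16 h.symm) h1
    clear * - c0 c1 c2 c3 c4 c5 c6 c7 c8 c9 c10 c11 c12 c13 c14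
    generalize G.Adj a t1 = p1 at *
    generalize G.Adj a t2 = p2 at *
    generalize G.Adj a c = p3 at *
    generalize G.Adj a d = p4 at *
    generalize G.Adj a t5 = p5 at *
    generalize G.Adj a t6 = p6 at *
    clear * - c0 c1 c2 c3 c4 c5 c6 c7 c8 c9 c10 c11 c12 c13 c14
    by_cases p1 <;> by_cases p2 <;> by_cases p3 <;> by_cases p4 <;> by_cases p5 <;>
      by_cases p6 <;> simp_all
  have cl3 : ∀ c ∈ D3, ∀ b ∈ D3, c ≠ b → G.Adj c b := fun c hc b hb h =>
    (hadj c (m3 c hc) b (m3 b hb)).2 (Or.inl ⟨by rw [f3 c hc, f3 b hb], h⟩)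
  have cl4 : ∀ c ∈ D4, ∀ b ∈ D4, c ≠ b → G.Adj c b := fun c hc b hb h =>
    (hadj c (m4 c hc) b (m4 b hb)).2 (Or.inl ⟨by rw [f4 c hc, f4 b hb], h⟩)
  have y3 : ∀ c ∈ D3, G.Adj c t2 ∧ G.Adj c t5 ∧ ¬ G.Adj c t6 := by
    intro c hc
    exact ⟨yes _ (m3 c hc) _ m2 (by rw [f3 c hc, f2, hdec]; decide),
      yes _ (m3 c hc) _ m5 (by rw [f3 c hc, f5, hdec]; decide),
      no _ (m3 c hc) _ m6 (by rw [f3 c hc, f6]; decide) (by rw [f3 c hc, f6, hdec]; decide)⟩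
  have y4 : ∀ c ∈ D4, G.Adj c t2 ∧ G.Adj c t6 ∧ ¬ G.Adj c t5 := by
    intro c hc
    exact ⟨yes _ (m4 c hc) _ m2 (by rw [f4 c hc, f2, hdec]; decide),
      yes _ (m4 c hc) _ m6 (by rw [f4 c hc, f6, hdec]; decide),
      no _ (m4 c hc) _ m5 (by rw [f4 c hc, f5]; decide) (by rw [f4 c hc, f5, hdec]; decide)⟩
  have e56 : G.Adj t5 t6 := yes _ m5 _ m6 (by rw [f5, f6, hdec]; decide)
  have e25 : ¬ G.Adj t2 t5 :=
    no _ m2 _ m5 (by rw [f2, f5]; decide) (by rw [f2, f5, hdec]; decide)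
  have e26 : ¬ G.Adj t2 t6 :=
    no _ m2 _ m6 (by rw [f2, f6]; decide) (by rw [f2, f6, hdec]; decide)
  obtain ⟨c0, hc0⟩ := hne3
  obtain ⟨d0, hd0⟩ := hne4
  have fib3 : ∀ c, D3 = {c} → ∀ u ∈ S, ∀ v ∈ S, φ u = 2 → φ v = 2 → u = v := by
    intro c hc u hu v hv h h'
    have r1 := (q u hu).2.2.2.2.1.2 h
    have r2 := (q v hv).2.2.2.2.1.2 h'
    rw [hc] at r1 r2
    rw [Set.mem_singleton_iff.1 r1, Set.mem_singleton_iff.1 r2]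
  have fib4 : ∀ c, D4 = {c} → ∀ u ∈ S, ∀ v ∈ S, φ u = 3 → φ v = 3 → u = v := by
    intro c hc u hu v hv h h'
    have r1 := (q u hu).2.2.2.2.2.2 h
    have r2 := (q v hv).2.2.2.2.2.2 h'
    rw [hc] at r1 r2
    rw [Set.mem_singleton_iff.1 r1, Set.mem_singleton_iff.1 r2]
  have one3 : (∃ p q, ∀ c ∈ D3, ¬ G.Adj a c ∧ G.Adj c p ∧ G.Adj p q ∧ ¬ G.Adj c q ∧ G.Adj q a ∧
      ¬ G.Adj p a) ∨ (∃ p q, ∀ c ∈ D3, ¬ G.Adj a c ∧ G.Adj c p ∧ G.Adj p a ∧ ¬ G.Adj c q ∧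
      G.Adj q a ∧ ¬ G.Adj p q) → ∃ c, D3 = {c} := by
    intro h
    refine ⟨c0, Set.eq_singleton_iff_unique_mem.2 ⟨hc0, fun b hb => ?_⟩⟩
    by_contra hne
    have hcb := cl3 b hb c0 hc0 hne
    rcases h with ⟨p, q, h⟩ | ⟨p, q, h⟩
    · obtain ⟨h1, h2, h3, h4, h5, h6⟩ := h b hb
      obtain ⟨k1, k2, k3, k4, k5, k6⟩ := h c0 hc0
      exact aux_zz hZ2 b c0 p q a hcb h2 k2 h3 h5 h4 (fun h => h1 h.symm) k4
        (fun h => k1 h.symm) h6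
    · obtain ⟨h1, h2, h3, h4, h5, h6⟩ := h b hb
      obtain ⟨k1, k2, k3, k4, k5, k6⟩ := h c0 hc0
      exact aux_zz hZ2 b c0 p a q hcb h2 k2 h3 h5.symm (fun h => h1 h.symm) h4
        (fun h => k1 h.symm) k4 h6
  have one4 : (∃ p q, ∀ c ∈ D4, ¬ G.Adj a c ∧ G.Adj c p ∧ G.Adj p q ∧ ¬ G.Adj c q ∧ G.Adj q a ∧
      ¬ G.Adj p a) ∨ (∃ p q, ∀ c ∈ D4, ¬ G.Adj a c ∧ G.Adj c p ∧ G.Adj p a ∧ ¬ G.Adj c q ∧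
      G.Adj q a ∧ ¬ G.Adj p q) → ∃ c, D4 = {c} := by
    intro h
    refine ⟨d0, Set.eq_singleton_iff_unique_mem.2 ⟨hd0, fun b hb => ?_⟩⟩
    by_contra hne
    have hcb := cl4 b hb d0 hd0 hne
    rcases h with ⟨p, q, h⟩ | ⟨p, q, h⟩
    · obtain ⟨h1, h2, h3, h4, h5, h6⟩ := h b hb
      obtain ⟨k1, k2, k3, k4, k5, k6⟩ := h d0 hd0
      exact aux_zz hZ2 b d0 p q a hcb h2 k2 h3 h5 h4 (fun h => h1 h.symm) k4
        (fun h => k1 h.symm) h6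
    · obtain ⟨h1, h2, h3, h4, h5, h6⟩ := h b hb
      obtain ⟨k1, k2, k3, k4, k5, k6⟩ := h d0 hd0
      exact aux_zz hZ2 b d0 p a q hcb h2 k2 h3 h5.symm (fun h => h1 h.symm) h4
        (fun h => k1 h.symm) k4 h6
  rcases key c0 hc0 d0 hd0 with ⟨h1, h2, h3, h4, h5, h6⟩ | ⟨h1, h2, h3, h4, h5, h6⟩ |
    ⟨h1, h2, h3, h4, h5, h6⟩ | ⟨h1, h2, h3, h4, h5, h6⟩ | ⟨h1, h2, h3, h4, h5, h6⟩ |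
    ⟨h1, h2, h3, h4, h5, h6⟩
  · exfalso
    obtain ⟨b, hb, hab⟩ := hnbr
    rcases hcase b hb with rfl | rfl | rfl | rfl | h | h
    · exact h1 hab
    · exact h2 hab
    · exact h5 hab
    · exact h6 hab
    · have := key b h d0 hd0
      tauto
    · have := key c0 hc0 b h
      tauto
  · left
    have HA : ∀ x ∈ S, G.Adj a x ↔ (x = t2 ∨ x = t5 ∨ x ∈ D3 ∨ x ∈ D4) := by
      intro x hx
      obtain ⟨a1, a2, a3, a4, a5, a6⟩ := q x hx
      rcases hcase x hx with h | h | h | h | h | h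
      · subst h; simp only [a1, a2, a3, a4, a5, a6, f1]; simp [*]
      · subst h; simp only [a1, a2, a3, a4, a5, a6, f2]; simp [*]
      · subst h; simp only [a1, a2, a3, a4, a5, a6, f5]; simp [*]
      · subst h; simp only [a1, a2, a3, a4, a5, a6, f6]; simp [*]
      · have := key x h d0 hd0
        simp only [a1, a2, a3, a4, a5, a6, f3 x h]
        clear * - this h1 h2 h3 h4 h5 h6
        simp_all
      · have := key c0 hc0 x h
        simp only [a1, a2, a3, a4, a5, a6, f4 x h]
        clear * - this h1 h2 h3 h4 h5 h6
        simp_all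
    exact aux_exp G S a ha HGraph2 HGraph2 {2, 3} φ hsurj hadj id 2 (by decide)
        (by
          intro i j
          fin_cases i <;> fin_cases j <;>
            simp [HGraph2, HGraph2, graphOfList, SimpleGraph.fromRel_adj]) (by decide)
        (by
          intro x hx
          rw [HA x hx]
          obtain ⟨a1, a2, a3, a4, a5, a6⟩ := q x hx
          simp only [a1, a2, a3, a4, a5, a6]
          generalize φ x = i
          clear * -
          fin_cases i <;> simp [HGraph2, graphOfList, SimpleGraph.fromRel_adj])
        (by simp)
        (by
          intro i hi
          refine hfib i ?_ ?_
          · rintro rfl; simp at hi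
          · rintro rfl; simp at hi)
  · left
    have HA : ∀ x ∈ S, G.Adj a x ↔ (x = t2 ∨ x = t6 ∨ x ∈ D3 ∨ x ∈ D4) := by
      intro x hx
      obtain ⟨a1, a2, a3, a4, a5, a6⟩ := q x hx
      rcases hcase x hx with h | h | h | h | h | h
      · subst h; simp only [a1, a2, a3, a4, a5, a6, f1]; simp [*]
      · subst h; simp only [a1, a2, a3, a4, a5, a6, f2]; simp [*]
      · subst h; simp only [a1, a2, a3, a4, a5, a6, f5]; simp [*]
      · subst h; simp only [a1, a2, a3, a4, a5, a6, f6]; simp [*]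
      · have := key x h d0 hd0
        simp only [a1, a2, a3, a4, a5, a6, f3 x h]
        clear * - this h1 h2 h3 h4 h5 h6
        simp_all
      · have := key c0 hc0 x h
        simp only [a1, a2, a3, a4, a5, a6, f4 x h]
        clear * - this h1 h2 h3 h4 h5 h6
        simp_all
    exact aux_exp G S a ha HGraph2 HGraph2 {2, 3} φ hsurj hadj id 3 (by decide)
        (by
          intro i j
          fin_cases i <;> fin_cases j <;>
            simp [HGraph2, HGraph2, graphOfList, SimpleGraph.fromRel_adj]) (by decide)
        (by
          intro x hx
          rw [HA x hx]
          obtain ⟨a1, a2, a3, a4, a5, a6⟩ := q x hx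
          simp only [a1, a2, a3, a4, a5, a6]
          generalize φ x = i
          clear * -
          fin_cases i <;> simp [HGraph2, graphOfList, SimpleGraph.fromRel_adj])
        (by simp)
        (by
          intro i hi
          refine hfib i ?_ ?_
          · rintro rfl; simp at hi
          · rintro rfl; simp at hi)
  · right; left
    have HA : ∀ x ∈ S, G.Adj a x ↔ (x = t1 ∨ x = t5 ∨ x ∈ D3) := by
      intro x hx
      obtain ⟨a1, a2, a3, a4, a5, a6⟩ := q x hx
      rcases hcase x hx with h | h | h | h | h | h
      · subst h; simp only [a1, a2, a3, a4, a5, a6, f1]; simp [*]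
      · subst h; simp only [a1, a2, a3, a4, a5, a6, f2]; simp [*]
      · subst h; simp only [a1, a2, a3, a4, a5, a6, f5]; simp [*]
      · subst h; simp only [a1, a2, a3, a4, a5, a6, f6]; simp [*]
      · have := key x h d0 hd0
        simp only [a1, a2, a3, a4, a5, a6, f3 x h]
        clear * - this h1 h2 h3 h4 h5 h6
        simp_all
      · have := key c0 hc0 x h
        simp only [a1, a2, a3, a4, a5, a6, f4 x h]
        clear * - this h1 h2 h3 h4 h5 h6
        simp_all
    obtain ⟨d, hone⟩ := one4 (Or.inl ⟨t6, t5, fun c hc => ⟨by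
      obtain ⟨a1, a2, a3, a4, a5, a6⟩ := q c (m4 c hc)
      simp [HA c (m4 c hc), a1, a2, a3, a4, a5, f4 c hc],
      (y4 c hc).2.1, e56.symm, (y4 c hc).2.2, h5.symm, fun h => h6 h.symm⟩⟩)
    exact ⟨HA, ⟨d, hone⟩, aux_exp G S a ha HGraph2 HGraph5 {6} φ hsurj hadj ![0, 2, 6, 3, 5, 1] 4 (by decide)
        (by
          intro i j
          fin_cases i <;> fin_cases j <;>
            simp [HGraph2, HGraph5, graphOfList, SimpleGraph.fromRel_adj]) (by decide)
        (by
          intro x hx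
          rw [HA x hx]
          obtain ⟨a1, a2, a3, a4, a5, a6⟩ := q x hx
          simp only [a1, a2, a3, a4, a5, a6]
          generalize φ x = i
          clear * -
          fin_cases i <;> simp [HGraph5, graphOfList, SimpleGraph.fromRel_adj])
        (fun _ => by decide)
        (by
          intro i hi
          by_cases i2 : i = 2
          · subst i2; simp at hi
          by_cases i3 : i = 3
          · subst i3; exact fib4 _ hone
          exact hfib i i2 i3)⟩
  · right; right; left
    have HA : ∀ x ∈ S, G.Adj a x ↔ (x = t1 ∨ x = t6 ∨ x ∈ D4) := by
      intro x hx
      obtain ⟨a1, a2, a3, a4, a5, a6⟩ := q x hx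
      rcases hcase x hx with h | h | h | h | h | h
      · subst h; simp only [a1, a2, a3, a4, a5, a6, f1]; simp [*]
      · subst h; simp only [a1, a2, a3, a4, a5, a6, f2]; simp [*]
      · subst h; simp only [a1, a2, a3, a4, a5, a6, f5]; simp [*]
      · subst h; simp only [a1, a2, a3, a4, a5, a6, f6]; simp [*]
      · have := key x h d0 hd0
        simp only [a1, a2, a3, a4, a5, a6, f3 x h]
        clear * - this h1 h2 h3 h4 h5 h6
        simp_all
      · have := key c0 hc0 x h
        simp only [a1, a2, a3, a4, a5, a6, f4 x h]
        clear * - this h1 h2 h3 h4 h5 h6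
        simp_all
    obtain ⟨d, hone⟩ := one3 (Or.inl ⟨t5, t6, fun c hc => ⟨by
      obtain ⟨a1, a2, a3, a4, a5, a6⟩ := q c (m3 c hc)
      simp [HA c (m3 c hc), a1, a2, a3, a4, a6, f3 c hc],
      (y3 c hc).2.1, e56, (y3 c hc).2.2, h6.symm, fun h => h5 h.symm⟩⟩)
    exact ⟨HA, ⟨d, hone⟩, aux_exp G S a ha HGraph2 HGraph5 {6} φ hsurj hadj ![0, 2, 3, 6, 1, 5] 4 (by decide)
        (by
          intro i j
          fin_cases i <;> fin_cases j <;>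
            simp [HGraph2, HGraph5, graphOfList, SimpleGraph.fromRel_adj]) (by decide)
        (by
          intro x hx
          rw [HA x hx]
          obtain ⟨a1, a2, a3, a4, a5, a6⟩ := q x hx
          simp only [a1, a2, a3, a4, a5, a6]
          generalize φ x = i
          clear * -
          fin_cases i <;> simp [HGraph5, graphOfList, SimpleGraph.fromRel_adj])
        (fun _ => by decide)
        (by
          intro i hi
          by_cases i2 : i = 3
          · subst i2; simp at hi
          by_cases i3 : i = 2
          · subst i3; exact fib3 _ hone
          exact hfib i i3 i2)⟩
  · right; right; right
    have HA : ∀ x ∈ S, G.Adj a x ↔ (x = t1 ∨ x = t2 ∨ x = t5 ∨ x = t6) := by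
      intro x hx
      obtain ⟨a1, a2, a3, a4, a5, a6⟩ := q x hx
      rcases hcase x hx with h | h | h | h | h | h
      · subst h; simp only [a1, a2, a3, a4, a5, a6, f1]; simp [*]
      · subst h; simp only [a1, a2, a3, a4, a5, a6, f2]; simp [*]
      · subst h; simp only [a1, a2, a3, a4, a5, a6, f5]; simp [*]
      · subst h; simp only [a1, a2, a3, a4, a5, a6, f6]; simp [*]
      · have := key x h d0 hd0
        simp only [a1, a2, a3, a4, a5, a6, f3 x h]
        clear * - this h1 h2 h3 h4 h5 h6
        simp_all
      · have := key c0 hc0 x h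
        simp only [a1, a2, a3, a4, a5, a6, f4 x h]
        clear * - this h1 h2 h3 h4 h5 h6
        simp_all
    obtain ⟨c, hone⟩ := one3 (Or.inr ⟨t2, t6, fun c hc => ⟨by
      obtain ⟨a1, a2, a3, a4, a5, a6⟩ := q c (m3 c hc)
      simp [HA c (m3 c hc), a1, a2, a3, a4, a6, f3 c hc],
      (y3 c hc).1, h2.symm, (y3 c hc).2.2, h6.symm, e26⟩⟩)
    obtain ⟨d, hone'⟩ := one4 (Or.inr ⟨t2, t5, fun c hc => ⟨by
      obtain ⟨a1, a2, a3, a4, a5, a6⟩ := q c (m4 c hc)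
      simp [HA c (m4 c hc), a1, a2, a3, a4, a5, f4 c hc],
      (y4 c hc).1, h2.symm, (y4 c hc).2.2, h5.symm, e25⟩⟩)
    exact ⟨HA, ⟨c, hone⟩, ⟨d, hone'⟩, aux_iso _ _ (aux_exp G S a ha HGraph2 HGraph6 ∅ φ hsurj hadj ![6, 4, 0, 2, 1, 3] 5 (by decide)
        (by
          intro i j
          fin_cases i <;> fin_cases j <;>
            simp [HGraph2, HGraph6, graphOfList, SimpleGraph.fromRel_adj]) (by decide)
        (by
          intro x hx
          rw [HA x hx]
          obtain ⟨a1, a2, a3, a4, a5, a6⟩ := q x hx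
          simp only [a1, a2, a3, a4, a5, a6]
          generalize φ x = i
          clear * -
          fin_cases i <;> simp [HGraph6, graphOfList, SimpleGraph.fromRel_adj])
        (fun _ => by decide)
        (by
          intro i hi
          by_cases i2 : i = 2
          · subst i2; exact fib3 _ hone
          by_cases i3 : i = 3
          · subst i3; exact fib4 _ hone'
          exact hfib i i2 i3))⟩
end

section
/- Let G be a connected {K_{1,3}, Z_2, N}-free graph which contains as an induced subgraph a graph H = H_3({C_{u_6}}), where C_{u_6} is a nonempty clique. Then for each vertex a ∈ V(G) − V(H) with N_G(a) ∩ V(H) ≠ ∅, one of the following holds: (i) G[V(H) ∪ {a}] ∈ ℋ_3; (ii) N_G(a) ∩ V(H) = {u_1, u_i, u_{7−i}} for some i ∈ {2,3} and |C_{u_6}| = 1 (and then G[V(H) ∪ {a}] ∈ ℋ_6); or (iii) N_G(a) ∩ V(H) = {u_4, u_5} (and then G[V(H) ∪ {a}] ∈ ℋ_5). -/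
open SimpleGraph

lemma claw_free {V : Type*} {G : SimpleGraph V} (h : ¬ ContainsInduced G K13) (p x y z : V)
    (hxy : x ≠ y) (hxz : x ≠ z) (hyz : y ≠ z)
    (h1 : G.Adj p x) (h2 : G.Adj p y) (h3 : G.Adj p z)
    (n1 : ¬ G.Adj x y) (n2 : ¬ G.Adj x z) (n3 : ¬ G.Adj y z) : False := by
  apply h
  have := h1.ne
  have := h2.ne
  have := h3.ne
  have key : ∀ i j : Fin 4, G.Adj (![p, x, y, z] i) (![p, x, y, z] j) ↔ K13.Adj i j := by
    clear h
    intro i j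
    fin_cases i <;> fin_cases j <;> simp_all [K13, graphOfList, G.adj_comm]
  refine ⟨⟨⟨![p, x, y, z], ?_⟩, ?_⟩⟩
  · intro i j hij
    fin_cases i <;> fin_cases j <;> simp_all
  · intro i j
    exact key i j

lemma z2_free {V : Type*} {G : SimpleGraph V} (h : ¬ ContainsInduced G (Zgraph 2))
    (p q r s t : V)
    (h1 : G.Adj p q) (h2 : G.Adj p r) (h3 : G.Adj q r) (h4 : G.Adj r s) (h5 : G.Adj s t)
    (n1 : ¬ G.Adj p s) (n2 : ¬ G.Adj q s) (n3 : ¬ G.Adj p t) (n4 : ¬ G.Adj q t)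
    (n5 : ¬ G.Adj r t) : False := by
  apply h
  have e1 := h1.ne
  have e2 := h2.ne
  have e3 := h3.ne
  have e4 := h4.ne
  have e5 := h5.ne
  have e6 : p ≠ s := by rintro rfl; exact n3 h5
  have e7 : q ≠ s := by rintro rfl; exact n4 h5
  have e8 : p ≠ t := by rintro rfl; exact n4 h1.symm
  have e9 : q ≠ t := by rintro rfl; exact n3 h1
  have e10 : r ≠ t := by rintro rfl; exact n3 h2
  have key : ∀ i j : Fin 5, G.Adj (![p, q, r, s, t] i) (![p, q, r, s, t] j) ↔
      (Zgraph 2).Adj i j := by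
    intro i j
    fin_cases i <;> fin_cases j <;> simp_all [Zgraph, G.adj_comm]
  refine ⟨⟨⟨![p, q, r, s, t], ?_⟩, ?_⟩⟩
  · intro i j hij
    change Fin 5 at i j
    fin_cases i <;> fin_cases j <;> simp_all
  · intro i j
    exact key i j

lemma mk_exp {V : Type*} {G : SimpleGraph V} {n : ℕ} {H : SimpleGraph (Fin n)}
    {U : Set (Fin n)} (S : Set V) (g : V → Fin n) (hs : ∀ i, ∃ x ∈ S, g x = i)
    (hi : ∀ x ∈ S, ∀ y ∈ S, g x = g y → g x ∉ U → x = y)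
    (hadj : ∀ x ∈ S, ∀ y ∈ S, G.Adj x y ↔ ((g x = g y ∧ x ≠ y) ∨ H.Adj (g x) (g y))) :
    IsExpansionOf (G.induce S) H U := by
  refine ⟨fun x => g x.1, ?_, ?_, ?_⟩
  · intro i
    obtain ⟨x, hx, rfl⟩ := hs i
    exact ⟨⟨x, hx⟩, rfl⟩
  · rintro i hU ⟨x, hx⟩ ⟨y, hy⟩ h1 h2
    subst h1
    exact Subtype.ext (hi x hx y hy h2.symm hU)
  · rintro ⟨x, hx⟩ ⟨y, hy⟩
    simpa using hadj x hx y hy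

lemma mk_iso {V : Type*} {G : SimpleGraph V} {n : ℕ} {H : SimpleGraph (Fin n)}
    (S : Set V) (g : V → Fin n) (hs : ∀ i, ∃ x ∈ S, g x = i)
    (hi : ∀ x ∈ S, ∀ y ∈ S, g x = g y → x = y)
    (hadj : ∀ x ∈ S, ∀ y ∈ S, G.Adj x y ↔ H.Adj (g x) (g y)) :
    Nonempty (G.induce S ≃g H) := by
  refine ⟨⟨Equiv.ofBijective (fun x : S => g x.1) ⟨?_, ?_⟩, ?_⟩⟩
  · rintro ⟨x, hx⟩ ⟨y, hy⟩ h
    exact Subtype.ext (hi x hx y hy h)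
  · intro i
    obtain ⟨x, hx, rfl⟩ := hs i
    exact ⟨⟨x, hx⟩, rfl⟩
  · rintro ⟨x, hx⟩ ⟨y, hy⟩
    exact (hadj x hx y hy).symm

set_option linter.unusedSimpArgs false in
set_option maxHeartbeats 2000000 in
lemma core {V : Type*} {G : SimpleGraph V}
    (hK13 : ¬ ContainsInduced G K13) (hZ2 : ¬ ContainsInduced G (Zgraph 2))
    (u1 u2 u3 u4 u5 c a : V)
    (d14 : u1 ≠ u4) (d15 : u1 ≠ u5) (d23 : u2 ≠ u3) (d25 : u2 ≠ u5) (d34 : u3 ≠ u4)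
    (d45 : u4 ≠ u5) (d1c : u1 ≠ c)
    (a1 : u1 ≠ a) (a2 : u2 ≠ a) (a3 : u3 ≠ a) (a4 : u4 ≠ a) (a5 : u5 ≠ a) (ac : c ≠ a)
    (A12 : G.Adj u1 u2) (A13 : G.Adj u1 u3) (A24 : G.Adj u2 u4) (A35 : G.Adj u3 u5)
    (A2c : G.Adj u2 c) (A3c : G.Adj u3 c) (A4c : G.Adj u4 c) (A5c : G.Adj u5 c)
    (N14 : ¬ G.Adj u1 u4) (N15 : ¬ G.Adj u1 u5) (N23 : ¬ G.Adj u2 u3) (N25 : ¬ G.Adj u2 u5)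
    (N34 : ¬ G.Adj u3 u4) (N45 : ¬ G.Adj u4 u5) (N1c : ¬ G.Adj u1 c)
    (h : G.Adj u1 a ∨ G.Adj u2 a ∨ G.Adj u3 a ∨ G.Adj u4 a ∨ G.Adj u5 a ∨ G.Adj c a) :
    (¬ G.Adj u1 a ∧ G.Adj u2 a ∧ G.Adj u3 a ∧ G.Adj u4 a ∧ G.Adj u5 a ∧ G.Adj c a) ∨
    (G.Adj u1 a ∧ G.Adj u2 a ∧ ¬ G.Adj u3 a ∧ ¬ G.Adj u4 a ∧ G.Adj u5 a ∧ ¬ G.Adj c a) ∨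
    (G.Adj u1 a ∧ ¬ G.Adj u2 a ∧ G.Adj u3 a ∧ G.Adj u4 a ∧ ¬ G.Adj u5 a ∧ ¬ G.Adj c a) ∨
    (¬ G.Adj u1 a ∧ ¬ G.Adj u2 a ∧ ¬ G.Adj u3 a ∧ G.Adj u4 a ∧ G.Adj u5 a ∧ ¬ G.Adj c a) := by
  have C := fun p x y z => claw_free (G := G) hK13 p x y z
  have Z := fun p q r s t => z2_free (G := G) hZ2 p q r s t
  have f0 := C u1 u2 u3 a
  have f1 := C u2 u1 u4 a
  have f2 := Z u1 a u2 c u5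
  have f3 := C u3 u1 u5 a
  have f4 := Z u1 a u3 c u4
  have f5 := Z u3 u5 c u4 a
  have f6 := C u2 u1 c a
  have f7 := Z u2 u4 c u5 a
  have f8 := C u3 u1 c a
  have f9 := C a u1 u4 u5
  have f10 := C c u2 u3 a
  have f11 := C c u3 u4 a
  have f12 := C c u2 u5 a
  have f13 := C c u4 u5 a
  have f14 := Z u4 a u2 u1 u3
  have f15 := Z u2 a u1 u3 u5
  have f16 := Z u2 u4 a u3 u5
  have f17 := Z u5 a u3 u1 u2
  have f18 := Z u3 a u1 u2 u4
  have f19 := Z u3 u5 a u2 u4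
  have f20 := Z u2 u4 a u5 u3
  have f21 := Z u3 u5 a u4 u2
  simp only [G.adj_comm a, A12, A13, A24, A35, A2c, A3c, A4c, A5c, A12.symm, A13.symm, A24.symm,
    A35.symm, A2c.symm, A3c.symm, A4c.symm, A5c.symm, N14, N15, N23, N25, N34, N45, N1c,
    mt SimpleGraph.Adj.symm N14, mt SimpleGraph.Adj.symm N15, mt SimpleGraph.Adj.symm N23, mt SimpleGraph.Adj.symm N25, mt SimpleGraph.Adj.symm N34, mt SimpleGraph.Adj.symm N45,
    mt SimpleGraph.Adj.symm N1c, ne_eq, d14, d15, d23, d25, d34, d45, d1c, a1, a2, a3, a4, a5, ac,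
    d14.symm, d15.symm, d23.symm, d25.symm, d34.symm, d45.symm, d1c.symm,
    not_false_eq_true, not_true_eq_false, true_imp_iff, false_imp_iff] at *
  clear C Z hK13 hZ2
  grind (splits := 40) +splitImp

set_option linter.unusedSimpArgs false in
set_option maxHeartbeats 4000000 in
/-- **Lemma 2.4 (Statement 7).** Let `G` be a connected `{K_{1,3}, Z₂, N}`-free graph
containing an induced subgraph `H = H₃({C_{u₆}})`, where `D6` is a nonempty clique playing
the role of `C_{u₆}` (here `V(H) = {u₁,…,u₅} ∪ D6`, with the adjacency of the expansion of
`H₃`).  Then for each vertex `a ∈ V(G) − V(H)` with `N_G(a) ∩ V(H) ≠ ∅` one of the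
conclusions (i)–(iii) holds. -/
theorem stmt7 {V : Type*} [Fintype V] (G : SimpleGraph V) (hconn : G.Connected)
    (hK13 : ¬ ContainsInduced G K13) (hZ2 : ¬ ContainsInduced G (Zgraph 2))
    (hN : ¬ ContainsInduced G Ngraph)
    (u1 u2 u3 u4 u5 : V) (D6 : Set V)
    (hus : List.Pairwise (· ≠ ·) [u1, u2, u3, u4, u5])
    (hne6 : D6.Nonempty)
    (hu1 : u1 ∉ D6) (hu2 : u2 ∉ D6) (hu3 : u3 ∉ D6) (hu4 : u4 ∉ D6) (hu5 : u5 ∉ D6)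
    (hind : ∀ u ∈ ({u1, u2, u3, u4, u5} ∪ D6 : Set V),
      ∀ v ∈ ({u1, u2, u3, u4, u5} ∪ D6 : Set V), u ≠ v →
      (G.Adj u v ↔
        (u = u1 ∧ v = u2) ∨ (v = u1 ∧ u = u2) ∨
        (u = u1 ∧ v = u3) ∨ (v = u1 ∧ u = u3) ∨
        (u = u2 ∧ v = u4) ∨ (v = u2 ∧ u = u4) ∨
        (u = u2 ∧ v ∈ D6) ∨ (v = u2 ∧ u ∈ D6) ∨
        (u = u3 ∧ v = u5) ∨ (v = u3 ∧ u = u5) ∨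
        (u = u3 ∧ v ∈ D6) ∨ (v = u3 ∧ u ∈ D6) ∨
        (u = u4 ∧ v ∈ D6) ∨ (v = u4 ∧ u ∈ D6) ∨
        (u = u5 ∧ v ∈ D6) ∨ (v = u5 ∧ u ∈ D6) ∨
        (u ∈ D6 ∧ v ∈ D6)))
    (a : V) (ha : a ∉ ({u1, u2, u3, u4, u5} ∪ D6 : Set V))
    (hnbr : ∃ b ∈ ({u1, u2, u3, u4, u5} ∪ D6 : Set V), G.Adj a b) :
    -- (i)
    IsExpansionOf (G.induce (({u1, u2, u3, u4, u5} ∪ D6 : Set V) ∪ {a})) HGraph3 {5} ∨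
    -- (ii), i = 2
    ((∀ x ∈ ({u1, u2, u3, u4, u5} ∪ D6 : Set V), G.Adj a x ↔ (x = u1 ∨ x = u2 ∨ x = u5)) ∧
      (∃ c, D6 = {c}) ∧
      Nonempty ((G.induce (({u1, u2, u3, u4, u5} ∪ D6 : Set V) ∪ {a})) ≃g HGraph6)) ∨
    -- (ii), i = 3
    ((∀ x ∈ ({u1, u2, u3, u4, u5} ∪ D6 : Set V), G.Adj a x ↔ (x = u1 ∨ x = u3 ∨ x = u4)) ∧
      (∃ c, D6 = {c}) ∧
      Nonempty ((G.induce (({u1, u2, u3, u4, u5} ∪ D6 : Set V) ∪ {a})) ≃g HGraph6)) ∨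
    -- (iii)
    ((∀ x ∈ ({u1, u2, u3, u4, u5} ∪ D6 : Set V), G.Adj a x ↔ (x = u4 ∨ x = u5)) ∧
      IsExpansionOf (G.induce (({u1, u2, u3, u4, u5} ∪ D6 : Set V) ∪ {a})) HGraph5 {6}) := by
  classical
  clear hconn hN
  simp only [List.pairwise_cons, List.mem_cons, List.not_mem_nil, or_false, forall_eq_or_imp,
    forall_eq, List.Pairwise.nil, and_true] at hus
  obtain ⟨⟨d12, d13, d14, d15⟩, ⟨d23, d24, d25⟩, ⟨d34, d35⟩, d45, -⟩ := hus
  have m1 : u1 ∈ ({u1, u2, u3, u4, u5} ∪ D6 : Set V) := by simp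
  have m2 : u2 ∈ ({u1, u2, u3, u4, u5} ∪ D6 : Set V) := by simp
  have m3 : u3 ∈ ({u1, u2, u3, u4, u5} ∪ D6 : Set V) := by simp
  have m4 : u4 ∈ ({u1, u2, u3, u4, u5} ∪ D6 : Set V) := by simp
  have m5 : u5 ∈ ({u1, u2, u3, u4, u5} ∪ D6 : Set V) := by simp
  have mc : ∀ c ∈ D6, c ∈ ({u1, u2, u3, u4, u5} ∪ D6 : Set V) := fun c hc => Or.inr hc
  have d1c : ∀ c ∈ D6, u1 ≠ c := by rintro c hc rfl; exact hu1 hc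
  have d2c : ∀ c ∈ D6, u2 ≠ c := by rintro c hc rfl; exact hu2 hc
  have d3c : ∀ c ∈ D6, u3 ≠ c := by rintro c hc rfl; exact hu3 hc
  have d4c : ∀ c ∈ D6, u4 ≠ c := by rintro c hc rfl; exact hu4 hc
  have d5c : ∀ c ∈ D6, u5 ≠ c := by rintro c hc rfl; exact hu5 hc
  have a1 : u1 ≠ a := by rintro rfl; exact ha m1
  have a2 : u2 ≠ a := by rintro rfl; exact ha m2
  have a3 : u3 ≠ a := by rintro rfl; exact ha m3
  have a4 : u4 ≠ a := by rintro rfl; exact ha m4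
  have a5 : u5 ≠ a := by rintro rfl; exact ha m5
  have ac : ∀ c ∈ D6, c ≠ a := by rintro c hc rfl; exact ha (mc _ hc)
  have haD : a ∉ D6 := fun h => ac a h rfl
  have A12 : G.Adj u1 u2 := by rw [hind _ m1 _ m2 d12]; simp
  have A13 : G.Adj u1 u3 := by rw [hind _ m1 _ m3 d13]; simp
  have A24 : G.Adj u2 u4 := by rw [hind _ m2 _ m4 d24]; simp
  have A35 : G.Adj u3 u5 := by rw [hind _ m3 _ m5 d35]; simp
  have A2c : ∀ c ∈ D6, G.Adj u2 c := by
    intro c hc; rw [hind _ m2 _ (mc c hc) (d2c c hc)]; simp [hc]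
  have A3c : ∀ c ∈ D6, G.Adj u3 c := by
    intro c hc; rw [hind _ m3 _ (mc c hc) (d3c c hc)]; simp [hc]
  have A4c : ∀ c ∈ D6, G.Adj u4 c := by
    intro c hc; rw [hind _ m4 _ (mc c hc) (d4c c hc)]; simp [hc]
  have A5c : ∀ c ∈ D6, G.Adj u5 c := by
    intro c hc; rw [hind _ m5 _ (mc c hc) (d5c c hc)]; simp [hc]
  have Acc : ∀ c ∈ D6, ∀ c' ∈ D6, (G.Adj c c' ↔ c ≠ c') := by
    intro c hc c' hc'
    refine ⟨fun h => h.ne, fun h => ?_⟩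
    rw [hind _ (mc c hc) _ (mc c' hc') h]; simp [hc, hc']
  have N14 : ¬ G.Adj u1 u4 := by
    rw [hind _ m1 _ m4 d14]; simp [*, Ne.symm, eq_comm]; try grind
  have N15 : ¬ G.Adj u1 u5 := by
    rw [hind _ m1 _ m5 d15]; grind
  have N23 : ¬ G.Adj u2 u3 := by
    rw [hind _ m2 _ m3 d23]; grind
  have N25 : ¬ G.Adj u2 u5 := by
    rw [hind _ m2 _ m5 d25]; grind
  have N34 : ¬ G.Adj u3 u4 := by
    rw [hind _ m3 _ m4 d34]; grind
  have N45 : ¬ G.Adj u4 u5 := by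
    rw [hind _ m4 _ m5 d45]; grind
  have N1c : ∀ c ∈ D6, ¬ G.Adj u1 c := by
    intro c hc
    rw [hind _ m1 _ (mc c hc) (d1c c hc)]; grind
  clear hind
  have K := fun c (hc : c ∈ D6) => core hK13 hZ2 u1 u2 u3 u4 u5 c a d14 d15 d23 d25 d34 d45
    (d1c c hc) a1 a2 a3 a4 a5 (ac c hc) A12 A13 A24 A35 (A2c c hc) (A3c c hc) (A4c c hc)
    (A5c c hc) N14 N15 N23 N25 N34 N45 (N1c c hc)
  have P : (¬ G.Adj u1 a ∧ G.Adj u2 a ∧ G.Adj u3 a ∧ G.Adj u4 a ∧ G.Adj u5 a ∧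
        ∀ c ∈ D6, G.Adj c a) ∨
      (G.Adj u1 a ∧ G.Adj u2 a ∧ ¬ G.Adj u3 a ∧ ¬ G.Adj u4 a ∧ G.Adj u5 a ∧
        ∀ c ∈ D6, ¬ G.Adj c a) ∨
      (G.Adj u1 a ∧ ¬ G.Adj u2 a ∧ G.Adj u3 a ∧ G.Adj u4 a ∧ ¬ G.Adj u5 a ∧
        ∀ c ∈ D6, ¬ G.Adj c a) ∨
      (¬ G.Adj u1 a ∧ ¬ G.Adj u2 a ∧ ¬ G.Adj u3 a ∧ G.Adj u4 a ∧ G.Adj u5 a ∧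
        ∀ c ∈ D6, ¬ G.Adj c a) := by
    have h0 : ∃ c ∈ D6, G.Adj u1 a ∨ G.Adj u2 a ∨ G.Adj u3 a ∨ G.Adj u4 a ∨ G.Adj u5 a ∨
        G.Adj c a := by
      obtain ⟨c, hc⟩ := hne6
      obtain ⟨b, hb, hab⟩ := hnbr
      have hab := hab.symm
      rcases hb with hb | hb
      · simp only [Set.mem_insert_iff, Set.mem_singleton_iff] at hb
        refine ⟨c, hc, ?_⟩
        rcases hb with rfl | rfl | rfl | rfl | rfl <;> simp [hab]
      · exact ⟨b, hb, by simp [hab]⟩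
    obtain ⟨c, hc, h⟩ := h0
    have h4 : G.Adj u4 a ∨ G.Adj u5 a := by
      rcases K c hc h with h | h | h | h
      · exact Or.inl h.2.2.2.1
      · exact Or.inr h.2.2.2.2.1
      · exact Or.inl h.2.2.2.1
      · exact Or.inl h.2.2.2.1
    have K' := fun c' hc' => K c' hc' (by
      rcases h4 with h4 | h4
      · exact Or.inr (Or.inr (Or.inr (Or.inl h4)))
      · exact Or.inr (Or.inr (Or.inr (Or.inr (Or.inl h4)))))
    rcases K c hc h with h | h | h | h
    · exact Or.inl ⟨h.1, h.2.1, h.2.2.1, h.2.2.2.1, h.2.2.2.2.1,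
        fun c' hc' => by have := K' c' hc'; clear K' K; simp_all⟩
    · exact Or.inr (Or.inl ⟨h.1, h.2.1, h.2.2.1, h.2.2.2.1, h.2.2.2.2.1,
        fun c' hc' => by have := K' c' hc'; clear K' K; simp_all⟩)
    · exact Or.inr (Or.inr (Or.inl ⟨h.1, h.2.1, h.2.2.1, h.2.2.2.1, h.2.2.2.2.1,
        fun c' hc' => by have := K' c' hc'; clear K' K; simp_all⟩))
    · exact Or.inr (Or.inr (Or.inr ⟨h.1, h.2.1, h.2.2.1, h.2.2.2.1, h.2.2.2.2.1,
        fun c' hc' => by have := K' c' hc'; clear K' K; simp_all⟩))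
  clear K hnbr
  have memS : ∀ x ∈ (({u1, u2, u3, u4, u5} ∪ D6 : Set V) ∪ {a}),
      x = u1 ∨ x = u2 ∨ x = u3 ∨ x = u4 ∨ x = u5 ∨ x ∈ D6 ∨ x = a := by
    intro x hx
    simp only [Set.mem_union, Set.mem_insert_iff, Set.mem_singleton_iff] at hx
    simpa only [or_assoc] using hx
  have gex : ∀ (n : ℕ) (i1 i2 i3 i4 i5 i6 i7 : Fin n), ∃ g : V → Fin n,
      g u1 = i1 ∧ g u2 = i2 ∧ g u3 = i3 ∧ g u4 = i4 ∧ g u5 = i5 ∧ (∀ c ∈ D6, g c = i6) ∧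
      g a = i7 := by
    intro n i1 i2 i3 i4 i5 i6 i7
    refine ⟨fun x => if x = u1 then i1 else if x = u2 then i2 else if x = u3 then i3 else
      if x = u4 then i4 else if x = u5 then i5 else if x = a then i7 else i6, ?_⟩
    refine ⟨by simp, by simp [d12.symm], by simp [d13.symm, d23.symm],
      by simp [d14.symm, d24.symm, d34.symm], by simp [d15.symm, d25.symm, d35.symm, d45.symm],
      ?_, by simp [a1.symm, a2.symm, a3.symm, a4.symm, a5.symm]⟩
    intro c hc
    simp [(d1c c hc).symm, (d2c c hc).symm, (d3c c hc).symm, (d4c c hc).symm, (d5c c hc).symm,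
      ac c hc]
  have ma : a ∈ (({u1, u2, u3, u4, u5} ∪ D6 : Set V) ∪ {a}) := Or.inr rfl
  have hsurj : ∀ (n : ℕ) (g : V → Fin n) (c : V), c ∈ D6 →
      (∀ i, i = g u1 ∨ i = g u2 ∨ i = g u3 ∨ i = g u4 ∨ i = g u5 ∨ i = g c ∨ i = g a) →
      ∀ i, ∃ x ∈ (({u1, u2, u3, u4, u5} ∪ D6 : Set V) ∪ {a}), g x = i := by
    intro n g c hc h i
    rcases h i with h | h | h | h | h | h | h
    · exact ⟨u1, Or.inl m1, h.symm⟩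
    · exact ⟨u2, Or.inl m2, h.symm⟩
    · exact ⟨u3, Or.inl m3, h.symm⟩
    · exact ⟨u4, Or.inl m4, h.symm⟩
    · exact ⟨u5, Or.inl m5, h.symm⟩
    · exact ⟨c, Or.inl (mc c hc), h.symm⟩
    · exact ⟨a, ma, h.symm⟩
  have B12 := A12.symm
  have B13 := A13.symm
  have B24 := A24.symm
  have B35 := A35.symm
  have B2c := fun c hc => (A2c c hc).symm
  have B3c := fun c hc => (A3c c hc).symm
  have B4c := fun c hc => (A4c c hc).symm
  have B5c := fun c hc => (A5c c hc).symm
  have M14 := mt SimpleGraph.Adj.symm N14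
  have M15 := mt SimpleGraph.Adj.symm N15
  have M23 := mt SimpleGraph.Adj.symm N23
  have M25 := mt SimpleGraph.Adj.symm N25
  have M34 := mt SimpleGraph.Adj.symm N34
  have M45 := mt SimpleGraph.Adj.symm N45
  have M1c := fun c hc => mt SimpleGraph.Adj.symm (N1c c hc)
  have uniq : (G.Adj u1 a) → (∀ c ∈ D6, ¬ G.Adj c a) →
      ((G.Adj u5 a) ∨ (G.Adj u4 a)) → ∃ c, D6 = {c} := by
    intro h1 hc h45
    obtain ⟨c, hcD⟩ := hne6
    refine ⟨c, Set.eq_singleton_iff_unique_mem.2 ⟨hcD, fun c' hc' => ?_⟩⟩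
    by_contra hne
    rcases h45 with h | h
    · exact z2_free hZ2 c c' u5 a u1 ((Acc c hcD c' hc').2 (Ne.symm hne)) (B5c c hcD)
        (B5c c' hc') h h1.symm (hc c hcD) (hc c' hc') (M1c c hcD) (M1c c' hc') M15
    · exact z2_free hZ2 c c' u4 a u1 ((Acc c hcD c' hc').2 (Ne.symm hne)) (B4c c hcD)
        (B4c c' hc') h h1.symm (hc c hcD) (hc c' hc') (M1c c hcD) (M1c c' hc') M14
  have e12 := d12.symm
  have e13 := d13.symm
  have e14 := d14.symm
  have e15 := d15.symm
  have e23 := d23.symm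
  have e24 := d24.symm
  have e25 := d25.symm
  have e34 := d34.symm
  have e35 := d35.symm
  have e45 := d45.symm
  have e1c := fun c hc => (d1c c hc).symm
  have b1 := a1.symm
  have e2c := fun c hc => (d2c c hc).symm
  have b2 := a2.symm
  have e3c := fun c hc => (d3c c hc).symm
  have b3 := a3.symm
  have e4c := fun c hc => (d4c c hc).symm
  have b4 := a4.symm
  have e5c := fun c hc => (d5c c hc).symm
  have b5 := a5.symm
  have bc := fun c hc => (ac c hc).symm
  rcases P with ⟨p1, p2, p3, p4, p5, pc⟩ | ⟨p1, p2, p3, p4, p5, pc⟩ | ⟨p1, p2, p3, p4, p5, pc⟩ |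
    ⟨p1, p2, p3, p4, p5, pc⟩
  · left
    have q1 := mt SimpleGraph.Adj.symm p1
    have q2 := p2.symm
    have q3 := p3.symm
    have q4 := p4.symm
    have q5 := p5.symm
    have qc := fun c hc => (pc c hc).symm
    obtain ⟨g, g1, g2, g3, g4, g5, gc, ga⟩ := gex 6 0 1 2 3 4 5 5
    refine mk_exp _ g ?_ ?_ ?_
    · obtain ⟨c, hc⟩ := hne6
      refine hsurj 6 g c hc ?_
      rw [g1, g2, g3, g4, g5, gc c hc, ga]
      decide
    · clear hne6 hsurj gex uniq hK13 hZ2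
      intro x hx y hy
      rcases memS x hx with rfl | rfl | rfl | rfl | rfl | hxD | rfl <;>
      rcases memS y hy with rfl | rfl | rfl | rfl | rfl | hyD | rfl <;>
      simp (disch := assumption) [g1, g2, g3, g4, g5, gc, ga]
    · clear hne6 hsurj gex uniq hK13 hZ2
      intro x hx y hy
      rcases memS x hx with rfl | rfl | rfl | rfl | rfl | hxD | rfl <;>
      rcases memS y hy with rfl | rfl | rfl | rfl | rfl | hyD | rfl <;>
      simp (disch := assumption) [g1, g2, g3, g4, g5, gc, ga, HGraph3, graphOfList, ac, bc,
          A12, A13, A24, A35, A2c, A3c, A4c, A5c, B12, B13, B24, B35, B2c, B3c, B4c, B5c,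
          N14, N15, N23, N25, N34, N45, N1c, M14, M15, M23, M25, M34, M45, M1c,
          p1, p2, p3, p4, p5, pc, q1, q2, q3, q4, q5, qc, Acc]
  · right; left
    have q1 := p1.symm
    have q2 := p2.symm
    have q3 := mt SimpleGraph.Adj.symm p3
    have q4 := mt SimpleGraph.Adj.symm p4
    have q5 := p5.symm
    have qc := fun c hc => mt SimpleGraph.Adj.symm (pc c hc)
    obtain ⟨g, g1, g2, g3, g4, g5, gc, ga⟩ := gex 7 0 4 1 6 3 5 2
    obtain ⟨c0, hc0⟩ := uniq p1 pc (by simp [p4, p5])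
    have Dsub : ∀ x ∈ D6, ∀ y ∈ D6, x = y := by
      rw [hc0]; rintro x rfl y rfl; rfl
    refine ⟨?_, ⟨c0, hc0⟩, mk_iso _ g ?_ ?_ ?_⟩
    · clear hc0 uniq gex hsurj
      intro x hx
      rcases memS x (Or.inl hx) with rfl | rfl | rfl | rfl | rfl | hxD | rfl <;> simp [*] at hx ⊢
    · obtain ⟨c, hc⟩ := hne6
      refine hsurj 7 g c hc ?_
      rw [g1, g2, g3, g4, g5, gc c hc, ga]
      decide
    · clear hc0 hne6 hsurj gex uniq hK13 hZ2
      intro x hx y hy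
      rcases memS x hx with rfl | rfl | rfl | rfl | rfl | hxD | rfl <;>
      rcases memS y hy with rfl | rfl | rfl | rfl | rfl | hyD | rfl <;>
      first
        | exact fun _ => Dsub _ hxD _ hyD
        | simp (disch := assumption) [g1, g2, g3, g4, g5, gc, ga]
    · clear hc0 hne6 hsurj gex uniq hK13 hZ2
      intro x hx y hy
      rcases memS x hx with rfl | rfl | rfl | rfl | rfl | hxD | rfl <;>
      rcases memS y hy with rfl | rfl | rfl | rfl | rfl | hyD | rfl <;>
      first
        | (obtain rfl := Dsub _ hxD _ hyD; simp)
        | simp (disch := assumption) [g1, g2, g3, g4, g5, gc, ga, HGraph6, graphOfList,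
          A12, A13, A24, A35, A2c, A3c, A4c, A5c, B12, B13, B24, B35, B2c, B3c, B4c, B5c,
          N14, N15, N23, N25, N34, N45, N1c, M14, M15, M23, M25, M34, M45, M1c,
          p1, p2, p3, p4, p5, pc, q1, q2, q3, q4, q5, qc, Acc]
  · right; right; left
    have q1 := p1.symm
    have q2 := mt SimpleGraph.Adj.symm p2
    have q3 := p3.symm
    have q4 := p4.symm
    have q5 := mt SimpleGraph.Adj.symm p5
    have qc := fun c hc => mt SimpleGraph.Adj.symm (pc c hc)
    obtain ⟨g, g1, g2, g3, g4, g5, gc, ga⟩ := gex 7 0 1 4 3 6 5 2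
    obtain ⟨c0, hc0⟩ := uniq p1 pc (by simp [p4, p5])
    have Dsub : ∀ x ∈ D6, ∀ y ∈ D6, x = y := by
      rw [hc0]; rintro x rfl y rfl; rfl
    refine ⟨?_, ⟨c0, hc0⟩, mk_iso _ g ?_ ?_ ?_⟩
    · clear hc0 uniq gex hsurj
      intro x hx
      rcases memS x (Or.inl hx) with rfl | rfl | rfl | rfl | rfl | hxD | rfl <;> simp [*] at hx ⊢
    · obtain ⟨c, hc⟩ := hne6
      refine hsurj 7 g c hc ?_
      rw [g1, g2, g3, g4, g5, gc c hc, ga]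
      decide
    · clear hc0 hne6 hsurj gex uniq hK13 hZ2
      intro x hx y hy
      rcases memS x hx with rfl | rfl | rfl | rfl | rfl | hxD | rfl <;>
      rcases memS y hy with rfl | rfl | rfl | rfl | rfl | hyD | rfl <;>
      first
        | exact fun _ => Dsub _ hxD _ hyD
        | simp (disch := assumption) [g1, g2, g3, g4, g5, gc, ga]
    · clear hc0 hne6 hsurj gex uniq hK13 hZ2
      intro x hx y hy
      rcases memS x hx with rfl | rfl | rfl | rfl | rfl | hxD | rfl <;>
      rcases memS y hy with rfl | rfl | rfl | rfl | rfl | hyD | rfl <;>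
      first
        | (obtain rfl := Dsub _ hxD _ hyD; simp)
        | simp (disch := assumption) [g1, g2, g3, g4, g5, gc, ga, HGraph6, graphOfList,
          A12, A13, A24, A35, A2c, A3c, A4c, A5c, B12, B13, B24, B35, B2c, B3c, B4c, B5c,
          N14, N15, N23, N25, N34, N45, N1c, M14, M15, M23, M25, M34, M45, M1c,
          p1, p2, p3, p4, p5, pc, q1, q2, q3, q4, q5, qc, Acc]
  · right; right; right
    have q1 := mt SimpleGraph.Adj.symm p1
    have q2 := mt SimpleGraph.Adj.symm p2
    have q3 := mt SimpleGraph.Adj.symm p3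
    have q4 := p4.symm
    have q5 := p5.symm
    have qc := fun c hc => mt SimpleGraph.Adj.symm (pc c hc)
    obtain ⟨g, g1, g2, g3, g4, g5, gc, ga⟩ := gex 7 0 2 4 3 5 6 1
    refine ⟨?_, mk_exp _ g ?_ ?_ ?_⟩
    · intro x hx
      rcases memS x (Or.inl hx) with rfl | rfl | rfl | rfl | rfl | hxD | rfl <;> simp [*] at hx ⊢
    · obtain ⟨c, hc⟩ := hne6
      refine hsurj 7 g c hc ?_
      rw [g1, g2, g3, g4, g5, gc c hc, ga]
      decide
    · clear hne6 hsurj gex uniq hK13 hZ2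
      intro x hx y hy
      rcases memS x hx with rfl | rfl | rfl | rfl | rfl | hxD | rfl <;>
      rcases memS y hy with rfl | rfl | rfl | rfl | rfl | hyD | rfl <;>
      simp (disch := assumption) [g1, g2, g3, g4, g5, gc, ga]
    · clear hne6 hsurj gex uniq hK13 hZ2
      intro x hx y hy
      rcases memS x hx with rfl | rfl | rfl | rfl | rfl | hxD | rfl <;>
      rcases memS y hy with rfl | rfl | rfl | rfl | rfl | hyD | rfl <;>
      simp (disch := assumption) [g1, g2, g3, g4, g5, gc, ga, HGraph5, graphOfList,
          A12, A13, A24, A35, A2c, A3c, A4c, A5c, B12, B13, B24, B35, B2c, B3c, B4c, B5c,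
          N14, N15, N23, N25, N34, N45, N1c, M14, M15, M23, M25, M34, M45, M1c,
          p1, p2, p3, p4, p5, pc, q1, q2, q3, q4, q5, qc, Acc]
end

section
/- Let G be a connected {K_{1,3}, Z_2, N}-free graph which contains as an induced subgraph a graph H = H_5({C_{w_7}}), where C_{w_7} is a nonempty clique. Then for each vertex a ∈ V(G) − V(H) with N_G(a) ∩ V(H) ≠ ∅, one of the following holds: (i) G[V(H) ∪ {a}] ∈ ℋ_5; or (ii) N_G(a) ∩ V(H) = {w_1, w_2, w_i, w_{9−i}} for some i ∈ {3,4} and |C_{w_7}| = 1 (and then G[V(H) ∪ {a}] ≅ H_7). -/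
open SimpleGraph

set_option linter.unusedSimpArgs false
set_option linter.unusedVariables false


theorem aux_claw_s9 {V : Type*} {G : SimpleGraph V} (h : ¬ ContainsInduced G K13)
    (c x y z : V) (hxy : x ≠ y) (hxz : x ≠ z) (hyz : y ≠ z)
    (h1 : G.Adj c x) (h2 : G.Adj c y) (h3 : G.Adj c z)
    (n1 : ¬ G.Adj x y) (n2 : ¬ G.Adj x z) (n3 : ¬ G.Adj y z) : False := by
  apply h
  have e1 := h1.ne
  have e2 := h2.ne
  have e3 := h3.ne
  refine ⟨⟨⟨![c, x, y, z], ?_⟩, ?_⟩⟩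
  · intro i j hij
    fin_cases i <;> fin_cases j <;> simp_all
  · intro i j
    change G.Adj (![c, x, y, z] i) (![c, x, y, z] j) ↔ _
    clear h
    fin_cases i <;> fin_cases j <;> first
      | (simp [K13, graphOfList, *]; done)
      | (rw [G.adj_comm]; simp [K13, graphOfList, *])

theorem aux_z2 {V : Type*} {G : SimpleGraph V} (h : ¬ ContainsInduced G (Zgraph 2))
    (p q r s t : V)
    (h1 : G.Adj p q) (h2 : G.Adj p r) (h3 : G.Adj q r) (h4 : G.Adj r s) (h5 : G.Adj s t)
    (n1 : ¬ G.Adj p s) (n2 : ¬ G.Adj p t) (n3 : ¬ G.Adj q s) (n4 : ¬ G.Adj q t)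
    (n5 : ¬ G.Adj r t) : False := by
  apply h
  have e1 := h1.ne
  have e2 := h2.ne
  have e3 := h3.ne
  have e4 := h4.ne
  have e5 := h5.ne
  have d1 : p ≠ s := by rintro rfl; exact n3 h1.symm
  have d2 : p ≠ t := by rintro rfl; exact n1 h5.symm
  have d3 : q ≠ s := by rintro rfl; exact n1 h1
  have d4 : q ≠ t := by rintro rfl; exact n2 h1
  have d5 : r ≠ t := by rintro rfl; exact n2 h2
  refine ⟨⟨⟨![p, q, r, s, t], ?_⟩, ?_⟩⟩
  · intro i j hij
    fin_cases i <;> fin_cases j <;> simp_all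
  · intro i j
    change G.Adj (![p, q, r, s, t] i) (![p, q, r, s, t] j) ↔ _
    clear h
    fin_cases i <;> fin_cases j <;> first
      | (simp [Zgraph, *]; done)
      | (rw [G.adj_comm]; simp [Zgraph, *])

/-- the adjacency pattern of `H₅` -/
structure AuxH5 {V : Type*} (G : SimpleGraph V) (w1 w2 w3 w4 w5 w6 c : V) : Prop where
  a13 : G.Adj w1 w3
  a34 : G.Adj w3 w4
  a42 : G.Adj w4 w2
  a26 : G.Adj w2 w6
  a65 : G.Adj w6 w5
  a51 : G.Adj w5 w1
  a73 : G.Adj c w3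
  a74 : G.Adj c w4
  a75 : G.Adj c w5
  a76 : G.Adj c w6
  n12 : ¬ G.Adj w1 w2
  n14 : ¬ G.Adj w1 w4
  n16 : ¬ G.Adj w1 w6
  n17 : ¬ G.Adj w1 c
  n23 : ¬ G.Adj w2 w3
  n25 : ¬ G.Adj w2 w5
  n27 : ¬ G.Adj w2 c
  n35 : ¬ G.Adj w3 w5
  n36 : ¬ G.Adj w3 w6
  n45 : ¬ G.Adj w4 w5
  n46 : ¬ G.Adj w4 w6

theorem aux_core {V : Type*} {G : SimpleGraph V}
    (hK : ¬ ContainsInduced G K13) (hZ : ¬ ContainsInduced G (Zgraph 2))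
    {w1 w2 w3 w4 w5 w6 c : V} (H : AuxH5 G w1 w2 w3 w4 w5 w6 c)
    (hws : List.Pairwise (· ≠ ·) [w1, w2, w3, w4, w5, w6]) (a : V)
    (d1 : a ≠ w1) (d2 : a ≠ w2) (d3 : a ≠ w3) (d4 : a ≠ w4) (d5 : a ≠ w5) (d6 : a ≠ w6)
    (d7 : a ≠ c) (c1 : w1 ≠ c) (c2 : w2 ≠ c) :
    (¬ G.Adj a w1 ∧ ¬ G.Adj a w2 ∧ ¬ G.Adj a w3 ∧ ¬ G.Adj a w4 ∧ ¬ G.Adj a w5 ∧ ¬ G.Adj a w6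
      ∧ ¬ G.Adj a c) ∨
    (¬ G.Adj a w1 ∧ ¬ G.Adj a w2 ∧ G.Adj a w3 ∧ G.Adj a w4 ∧ G.Adj a w5 ∧ G.Adj a w6
      ∧ G.Adj a c) ∨
    (G.Adj a w1 ∧ G.Adj a w2 ∧ G.Adj a w3 ∧ ¬ G.Adj a w4 ∧ ¬ G.Adj a w5 ∧ G.Adj a w6
      ∧ ¬ G.Adj a c) ∨
    (G.Adj a w1 ∧ G.Adj a w2 ∧ ¬ G.Adj a w3 ∧ G.Adj a w4 ∧ G.Adj a w5 ∧ ¬ G.Adj a w6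
      ∧ ¬ G.Adj a c) := by
  obtain ⟨a13, a34, a42, a26, a65, a51, a73, a74, a75, a76, n12, n14, n16, n17, n23, n25, n27,
    n35, n36, n45, n46⟩ := H
  have f1 := a13.symm
  have f2 := a34.symm
  have f3 := a42.symm
  have f4 := a26.symm
  have f5 := a65.symm
  have f6 := a51.symm
  have f7 := a73.symm
  have f8 := a74.symm
  have f9 := a75.symm
  have f10 := a76.symm
  have C := @aux_claw_s9 V G hK
  have Z := @aux_z2 V G hZ
  have k1 := C w1 a w3 w5
  have k2 := C w3 a w1 w4
  have k3 := C w4 a w2 c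
  have k4 := C a w2 w3 w5
  have k5 := C c a w3 w6
  have k6 := C a w1 w4 w6
  have k7 := C w6 a w2 w5
  have k8 := C c a w4 w5
  have z1 := Z a w1 w3 w4 w2
  have z2 := Z w3 w4 c w5 a
  have z3 := Z a w6 c w3 w1
  have z4 := Z a w4 w3 w1 w5
  have z5 := Z a w3 w1 w5 w6
  have z6 := Z a w2 w4 w3 w1
  have z7 := Z w3 c w4 w2 a
  have z8 := Z a w3 w4 w2 w6
  have z9 := Z a w5 w1 w3 w4
  clear C Z hK hZ
  have s1 := G.adj_comm w1 a
  have s2 := G.adj_comm w2 a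
  have s3 := G.adj_comm w3 a
  have s4 := G.adj_comm w4 a
  have s5 := G.adj_comm w5 a
  have s6 := G.adj_comm w6 a
  have s7 := G.adj_comm c a
  have t1 := G.adj_comm w2 w1
  have t2 := G.adj_comm w4 w1
  have t3 := G.adj_comm w6 w1
  have t4 := G.adj_comm c w1
  have t5 := G.adj_comm w3 w2
  have t6 := G.adj_comm w5 w2
  have t7 := G.adj_comm c w2
  have t8 := G.adj_comm w5 w3
  have t9 := G.adj_comm w6 w3
  have t10 := G.adj_comm w5 w4
  have t11 := G.adj_comm w6 w4
  simp only [List.pairwise_cons, List.mem_cons, List.not_mem_nil, or_false, forall_eq_or_imp,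
    forall_eq] at hws
  obtain ⟨⟨e12, e13, e14, e15, e16⟩, ⟨e23, e24, e25, e26⟩, ⟨e34, e35, e36⟩, ⟨e45, e46⟩, e56, -⟩ := hws
  have g1 := a73.ne'
  have g2 := a74.ne'
  have g3 := a75.ne'
  have g4 := a76.ne'
  simp only [ne_eq, e12, e13, e14, e15, e16, e23, e24, e25, e26, e34, e35, e36, e45, e46, e56,
    g1, g2, g3, g4, d1, d2, d3, d4, d5, d6, d7, c1, c2, s1, s2, s3, s4, s5, s6, s7, t1, t2, t3, t4, t5, t6, t7, t8, t9, t10, t11, f1, f2, f3, f4, f5, f6, f7, f8, f9, f10,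
    a13, a34, a42, a26, a65, a51, a73, a74, a75, a76, n12, n14, n16, n17, n23, n25, n27,
    n35, n36, n45, n46, not_true_eq_false, not_false_eq_true, true_implies, false_implies,
    implies_true, imp_false, not_not] at k1 k2 k3 k4 k5 k6 k7 k8 z1 z2 z3 z4 z5 z6 z7 z8 z9
  clear s1 s2 s3 s4 s5 s6 s7 t1 t2 t3 t4 t5 t6 t7 t8 t9 t10 t11 f1 f2 f3 f4 f5 f6 f7 f8 f9 f10
  generalize G.Adj a w1 = x1 at *
  generalize G.Adj a w2 = x2 at *
  generalize G.Adj a w3 = x3 at *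
  generalize G.Adj a w4 = x4 at *
  generalize G.Adj a w5 = x5 at *
  generalize G.Adj a w6 = x6 at *
  generalize G.Adj a c = x7 at *
  clear a13 a34 a42 a26 a65 a51 a73 a74 a75 a76 n12 n14 n16 n17 n23 n25 n27 n35 n36 n45 n46
  by_cases x1 <;> by_cases x2 <;> by_cases x3 <;> by_cases x4 <;> by_cases x5 <;> by_cases x6 <;>
  by_cases x7 <;> simp_all only [not_true_eq_false, not_false_eq_true, 
    true_and, and_true, false_and, and_false, or_true, true_or, or_false, false_or, true_implies,
    false_implies, implies_true, imp_false]

theorem aux_exp_s9 {V : Type*} {G : SimpleGraph V} {w1 w2 w3 w4 w5 w6 : V} {D : Set V}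
    (hne : D.Nonempty)
    (hws : List.Pairwise (· ≠ ·) [w1, w2, w3, w4, w5, w6])
    (hw1 : w1 ∉ D) (hw2 : w2 ∉ D) (hw3 : w3 ∉ D)
    (hw4 : w4 ∉ D) (hw5 : w5 ∉ D) (hw6 : w6 ∉ D)
    (H : ∀ c ∈ D, AuxH5 G w1 w2 w3 w4 w5 w6 c)
    (hcl : ∀ c ∈ D, ∀ d ∈ D, c ≠ d → G.Adj c d)
    (S : Set V) (hS : ∀ x, x ∈ S ↔ (x = w1 ∨ x = w2 ∨ x = w3 ∨ x = w4 ∨ x = w5 ∨ x = w6 ∨ x ∈ D)) :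
    IsExpansionOf (G.induce S) HGraph5 {6} := by
  classical
  obtain ⟨c, hc⟩ := hne
  simp only [List.pairwise_cons, List.mem_cons, List.not_mem_nil, or_false, forall_eq_or_imp,
    forall_eq] at hws
  let g : V → Fin 7 := fun x => if x = w1 then 0 else if x = w2 then 1 else if x = w3 then 2
    else if x = w4 then 3 else if x = w5 then 4 else if x = w6 then 5 else 6
  have g1 : g w1 = 0 := by simp [g]
  have g2 : g w2 = 1 := by simp only [g]; grind
  have g3 : g w3 = 2 := by simp only [g]; grind
  have g4 : g w4 = 3 := by simp only [g]; grind
  have g5 : g w5 = 4 := by simp only [g]; grind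
  have g6 : g w6 = 5 := by simp only [g]; grind
  have g7 : ∀ d ∈ D, g d = 6 := by intro d hd; simp only [g]; grind
  have key : ∀ u ∈ S, ∀ v ∈ S, G.Adj u v ↔ ((g u = g v ∧ u ≠ v) ∨ HGraph5.Adj (g u) (g v)) := by
    obtain ⟨a13, a34, a42, a26, a65, a51, -, -, -, -, n12, n14, n16, -, n23, n25, -,
      n35, n36, n45, n46⟩ := H c hc
    have A3 : ∀ d ∈ D, G.Adj d w3 := fun d hd => (H d hd).a73
    have A4 : ∀ d ∈ D, G.Adj d w4 := fun d hd => (H d hd).a74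
    have A5 : ∀ d ∈ D, G.Adj d w5 := fun d hd => (H d hd).a75
    have A6 : ∀ d ∈ D, G.Adj d w6 := fun d hd => (H d hd).a76
    have A1 : ∀ d ∈ D, ¬ G.Adj w1 d := fun d hd => (H d hd).n17
    have A2 : ∀ d ∈ D, ¬ G.Adj w2 d := fun d hd => (H d hd).n27
    have B3 : ∀ d ∈ D, G.Adj w3 d := fun d hd => (H d hd).a73.symm
    have B4 : ∀ d ∈ D, G.Adj w4 d := fun d hd => (H d hd).a74.symm
    have B5 : ∀ d ∈ D, G.Adj w5 d := fun d hd => (H d hd).a75.symm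
    have B6 : ∀ d ∈ D, G.Adj w6 d := fun d hd => (H d hd).a76.symm
    have B1 : ∀ d ∈ D, ¬ G.Adj d w1 := fun d hd h => (H d hd).n17 h.symm
    have B2 : ∀ d ∈ D, ¬ G.Adj d w2 := fun d hd h => (H d hd).n27 h.symm
    have f1 := a13.symm
    have f2 := a34.symm
    have f3 := a42.symm
    have f4 := a26.symm
    have f5 := a65.symm
    have f6 := a51.symm
    have t1 := mt (fun h => G.adj_symm h) n12
    have t2 := mt (fun h => G.adj_symm h) n14
    have t3 := mt (fun h => G.adj_symm h) n16
    have t5 := mt (fun h => G.adj_symm h) n23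
    have t6 := mt (fun h => G.adj_symm h) n25
    have t8 := mt (fun h => G.adj_symm h) n35
    have t9 := mt (fun h => G.adj_symm h) n36
    have t10 := mt (fun h => G.adj_symm h) n45
    have t11 := mt (fun h => G.adj_symm h) n46
    clear_value g
    intro u hu v hv
    rw [hS] at hu hv
    rcases hu with rfl | rfl | rfl | rfl | rfl | rfl | hu <;>
    rcases hv with rfl | rfl | rfl | rfl | rfl | rfl | hv <;>
    first
    | (have e := g7 u hu
       have e' := g7 v hv
       rw [e, e']
       simp only [SimpleGraph.irrefl, or_false, true_and]
       exact ⟨fun h => h.ne, hcl u hu v hv⟩)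
    | simp [*, HGraph5, graphOfList]
  refine ⟨fun x => g x.1, ?_, ?_, ?_⟩
  · intro i
    have m : ∀ x, x ∈ S → g x = i → ∃ y : S, g y.1 = i := fun x hx h => ⟨⟨x, hx⟩, h⟩
    fin_cases i
    · exact m w1 (by simp [hS]) g1
    · exact m w2 (by simp [hS]) g2
    · exact m w3 (by simp [hS]) g3
    · exact m w4 (by simp [hS]) g4
    · exact m w5 (by simp [hS]) g5
    · exact m w6 (by simp [hS]) g6
    · exact m c (by simp [hS, hc]) (g7 c hc)
  · rintro i hi ⟨u, hu⟩ ⟨v, hv⟩ h1 h2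
    apply Subtype.ext
    simp only [Set.mem_singleton_iff] at hi
    simp only at h1 h2 ⊢
    rw [hS] at hu hv
    clear_value g
    grind
  · rintro ⟨u, hu⟩ ⟨v, hv⟩
    simpa using key u hu v hv

theorem aux_iso_s9 {V : Type*} {G : SimpleGraph V} {S : Set V} (f : Fin 8 → V)
    (hf : Function.Injective f) (hS : Set.range f = S)
    (h : ∀ i j, G.Adj (f i) (f j) ↔ HGraph7.Adj i j) :
    Nonempty (G.induce S ≃g HGraph7) := by
  subst hS
  refine ⟨(⟨Equiv.ofInjective f hf, ?_⟩ : HGraph7 ≃g G.induce (Set.range f)).symm⟩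
  intro i j
  simpa using h i j

theorem aux_iso7 {V : Type*} {G : SimpleGraph V} {w1 w2 w3 w4 w5 w6 c a : V}
    (hws : List.Pairwise (· ≠ ·) [w1, w2, w3, w4, w5, w6, c, a])
    (Hc : AuxH5 G w1 w2 w3 w4 w5 w6 c)
    (x1 : G.Adj a w1) (x2 : G.Adj a w2) (x3 : G.Adj a w3) (x4 : ¬ G.Adj a w4)
    (x5 : ¬ G.Adj a w5) (x6 : G.Adj a w6) (x7 : ¬ G.Adj a c) (S : Set V)
    (hS : ∀ x, x ∈ S ↔ (x = w1 ∨ x = w2 ∨ x = w3 ∨ x = w4 ∨ x = w5 ∨ x = w6 ∨ x = c ∨ x = a)) :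
    Nonempty (G.induce S ≃g HGraph7) := by
  refine aux_iso_s9 ![w1, w5, a, w6, w3, c, w2, w4] ?_ ?_ ?_
  · rw [← List.nodup_ofFn]
    have h : List.Perm [w1, w2, w3, w4, w5, w6, c, a] [w1, w5, a, w6, w3, c, w2, w4] := by
      classical
      rw [List.perm_iff_count]
      intro y
      simp only [List.count_cons, List.count_nil]
      omega
    simpa using h.nodup_iff.1 hws
  · ext x
    rw [hS]
    simp only [Set.mem_range, Fin.exists_fin_succ]
    simp [eq_comm]
    tauto
  · clear hS hws
    obtain ⟨a13, a34, a42, a26, a65, a51, a73, a74, a75, a76, n12, n14, n16, n17, n23, n25,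
      n27, n35, n36, n45, n46⟩ := Hc
    intro i j
    fin_cases i <;> fin_cases j <;> first
      | (simp [HGraph7, graphOfList, *]; done)
      | (rw [G.adj_comm]; simp [HGraph7, graphOfList, *])

set_option maxHeartbeats 4000000 in
/-- **Lemma 2.6 (Statement 9).** Let `G` be a connected `{K_{1,3}, Z₂, N}`-free graph
containing an induced subgraph `H = H₅({C_{w₇}})`, where `D7` is a nonempty clique playing
the role of `C_{w₇}` (here `V(H) = {w₁,…,w₆} ∪ D7`; the adjacency of the expansion of `H₅`
consists of the 6-cycle `w₁w₃w₄w₂w₆w₅w₁` together with `D7` joined to `w₃, w₄, w₅, w₆`).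
Then for each vertex `a ∈ V(G) − V(H)` with `N_G(a) ∩ V(H) ≠ ∅` one of (i), (ii) holds. -/
theorem stmt9 {V : Type*} [Fintype V] (G : SimpleGraph V) (hconn : G.Connected)
    (hK13 : ¬ ContainsInduced G K13) (hZ2 : ¬ ContainsInduced G (Zgraph 2))
    (hN : ¬ ContainsInduced G Ngraph)
    (w1 w2 w3 w4 w5 w6 : V) (D7 : Set V)
    (hws : List.Pairwise (· ≠ ·) [w1, w2, w3, w4, w5, w6])
    (hne7 : D7.Nonempty)
    (hw1 : w1 ∉ D7) (hw2 : w2 ∉ D7) (hw3 : w3 ∉ D7)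
    (hw4 : w4 ∉ D7) (hw5 : w5 ∉ D7) (hw6 : w6 ∉ D7)
    (hind : ∀ u ∈ ({w1, w2, w3, w4, w5, w6} ∪ D7 : Set V),
      ∀ v ∈ ({w1, w2, w3, w4, w5, w6} ∪ D7 : Set V), u ≠ v →
      (G.Adj u v ↔
        (u = w1 ∧ v = w3) ∨ (v = w1 ∧ u = w3) ∨
        (u = w3 ∧ v = w4) ∨ (v = w3 ∧ u = w4) ∨
        (u = w4 ∧ v = w2) ∨ (v = w4 ∧ u = w2) ∨
        (u = w2 ∧ v = w6) ∨ (v = w2 ∧ u = w6) ∨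
        (u = w6 ∧ v = w5) ∨ (v = w6 ∧ u = w5) ∨
        (u = w5 ∧ v = w1) ∨ (v = w5 ∧ u = w1) ∨
        (u = w3 ∧ v ∈ D7) ∨ (v = w3 ∧ u ∈ D7) ∨
        (u = w4 ∧ v ∈ D7) ∨ (v = w4 ∧ u ∈ D7) ∨
        (u = w5 ∧ v ∈ D7) ∨ (v = w5 ∧ u ∈ D7) ∨
        (u = w6 ∧ v ∈ D7) ∨ (v = w6 ∧ u ∈ D7) ∨
        (u ∈ D7 ∧ v ∈ D7)))
    (a : V) (ha : a ∉ ({w1, w2, w3, w4, w5, w6} ∪ D7 : Set V))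
    (hnbr : ∃ b ∈ ({w1, w2, w3, w4, w5, w6} ∪ D7 : Set V), G.Adj a b) :
    -- (i)
    IsExpansionOf (G.induce (({w1, w2, w3, w4, w5, w6} ∪ D7 : Set V) ∪ {a})) HGraph5 {6} ∨
    -- (ii), i = 3
    ((∀ x ∈ ({w1, w2, w3, w4, w5, w6} ∪ D7 : Set V),
        G.Adj a x ↔ (x = w1 ∨ x = w2 ∨ x = w3 ∨ x = w6)) ∧
      (∃ c, D7 = {c}) ∧
      Nonempty ((G.induce (({w1, w2, w3, w4, w5, w6} ∪ D7 : Set V) ∪ {a})) ≃g HGraph7)) ∨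
    -- (ii), i = 4
    ((∀ x ∈ ({w1, w2, w3, w4, w5, w6} ∪ D7 : Set V),
        G.Adj a x ↔ (x = w1 ∨ x = w2 ∨ x = w4 ∨ x = w5)) ∧
      (∃ c, D7 = {c}) ∧
      Nonempty ((G.induce (({w1, w2, w3, w4, w5, w6} ∪ D7 : Set V) ∪ {a})) ≃g HGraph7)) := by
  have hP := hws
  simp only [List.pairwise_cons, List.mem_cons, List.not_mem_nil, or_false, forall_eq_or_imp,
    forall_eq] at hP
  obtain ⟨⟨e12, e13, e14, e15, e16⟩, ⟨e23, e24, e25, e26⟩, ⟨e34, e35, e36⟩, ⟨e45, e46⟩, e56, -⟩ := hP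
  have hA : ∀ c ∈ D7, AuxH5 G w1 w2 w3 w4 w5 w6 c := by
    intro c hc
    have c1 : w1 ≠ c := fun h => hw1 (h ▸ hc)
    have c2 : w2 ≠ c := fun h => hw2 (h ▸ hc)
    have c3 : w3 ≠ c := fun h => hw3 (h ▸ hc)
    have c4 : w4 ≠ c := fun h => hw4 (h ▸ hc)
    have c5 : w5 ≠ c := fun h => hw5 (h ▸ hc)
    have c6 : w6 ≠ c := fun h => hw6 (h ▸ hc)
    constructor <;>
    · rw [hind _ (by simp [hc]) _ (by simp [hc]) (by first | assumption | (apply Ne.symm; assumption))]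
      simp [*, Ne.symm, eq_comm]
  have hcl : ∀ c ∈ D7, ∀ d ∈ D7, c ≠ d → G.Adj c d := by
    intro c hc d hd hcd
    rw [hind c (by simp [hc]) d (by simp [hd]) hcd]
    simp [hc, hd]
  simp only [Set.mem_union, Set.mem_insert_iff, Set.mem_singleton_iff, not_or] at ha
  obtain ⟨⟨d1, d2, d3, d4, d5, d6⟩, d7⟩ := ha
  have dc : ∀ c ∈ D7, a ≠ c := fun c hc h => d7 (h ▸ hc)
  have core := fun c hc => aux_core hK13 hZ2 (hA c hc) hws a d1 d2 d3 d4 d5 d6 (dc c hc)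
    (fun h => hw1 (h ▸ hc)) (fun h => hw2 (h ▸ hc))
  -- uniqueness of the clique vertex when `a` sees `w1` and misses it
  have uniq : ∀ c ∈ D7, G.Adj a w1 → (¬ G.Adj a w3 ∨ ¬ G.Adj a w5) → 
      (∀ d ∈ D7, ¬ G.Adj a d) → D7 = {c} := by
    intro c hc h1 h35 hnd
    ext d
    simp only [Set.mem_singleton_iff]
    refine ⟨fun hd => ?_, fun h => h ▸ hc⟩
    by_contra hne
    have hdc := hcl d hd c hc hne
    have Hc := hA c hc
    have Hd := hA d hd
    have ac := fun h => hnd c hc (G.adj_symm h)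
    have ad := fun h => hnd d hd (G.adj_symm h)
    rcases h35 with h | h
    · exact aux_z2 hZ2 d c w3 w1 a hdc Hd.a73 Hc.a73 Hc.a13.symm h1.symm (fun h => Hd.n17 h.symm)
        ad (fun h => Hc.n17 h.symm) ac (fun h' => h h'.symm)
    · exact aux_z2 hZ2 d c w5 w1 a hdc Hd.a75 Hc.a75 Hc.a51 h1.symm (fun h => Hd.n17 h.symm)
        ad (fun h => Hc.n17 h.symm) ac (fun h' => h h'.symm)
  obtain ⟨c, hc⟩ := hne7
  have c1 : w1 ≠ c := fun h => hw1 (h ▸ hc)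
  have c2 : w2 ≠ c := fun h => hw2 (h ▸ hc)
  have c3 : w3 ≠ c := fun h => hw3 (h ▸ hc)
  have c4 : w4 ≠ c := fun h => hw4 (h ▸ hc)
  have c5 : w5 ≠ c := fun h => hw5 (h ▸ hc)
  have c6 : w6 ≠ c := fun h => hw6 (h ▸ hc)
  have Hc := hA c hc
  rcases core c hc with h | h | h | h
  · exfalso
    obtain ⟨b, hb, hab⟩ := hnbr
    simp only [Set.mem_union, Set.mem_insert_iff, Set.mem_singleton_iff] at hb
    obtain ⟨x1, x2, x3, x4, x5, x6, x7⟩ := h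
    rcases hb with (rfl | rfl | rfl | rfl | rfl | rfl) | hb
    all_goals first | contradiction | skip
    have := core b hb
    tauto
  · left
    have hall : ∀ d ∈ D7, G.Adj a d := by
      intro d hd
      have := core d hd
      tauto
    obtain ⟨x1, x2, x3, x4, x5, x6, x7⟩ := h
    refine aux_exp_s9 (D := D7 ∪ {a}) ⟨c, Or.inl hc⟩ hws ?_ ?_ ?_ ?_ ?_ ?_ ?_ ?_ _ ?_
    · simp [hw1, Ne.symm d1]
    · simp [hw2, Ne.symm d2]
    · simp [hw3, Ne.symm d3]
    · simp [hw4, Ne.symm d4]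
    · simp [hw5, Ne.symm d5]
    · simp [hw6, Ne.symm d6]
    · rintro d (hd | rfl)
      · exact hA d hd
      · exact { Hc with
          a73 := x3, a74 := x4, a75 := x5, a76 := x6
          n17 := fun h => x1 h.symm
          n27 := fun h => x2 h.symm }
    · rintro d (hd | rfl) e (he | rfl) hde
      · exact hcl d hd e he hde
      · exact (hall d hd).symm
      · exact hall e he
      · exact absurd rfl hde
    · intro x
      simp only [Set.mem_union, Set.mem_insert_iff, Set.mem_singleton_iff, or_assoc]
  · right; left
    have hnd : ∀ d ∈ D7, ¬ G.Adj a d := by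
      intro d hd
      have := core d hd
      tauto
    obtain ⟨x1, x2, x3, x4, x5, x6, x7⟩ := h
    have hD := uniq c hc x1 (Or.inr x5) hnd
    have dac := dc c hc
    clear hind uniq core hcl hA dc hnbr hnd
    subst hD
    refine ⟨?_, ⟨c, rfl⟩, ?_⟩
    · intro x hx
      simp only [Set.mem_union, Set.mem_insert_iff, Set.mem_singleton_iff] at hx
      rcases hx with (rfl | rfl | rfl | rfl | rfl | rfl) | rfl <;>
        grind only
    · exact aux_iso7 (by
          simp only [List.pairwise_cons, List.mem_cons, List.not_mem_nil, or_false,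
            forall_eq_or_imp, forall_eq, List.Pairwise.nil]
          grind only) Hc x1 x2 x3 x4 x5 x6 x7 _ (by
          intro x
          simp only [Set.mem_union, Set.mem_insert_iff, Set.mem_singleton_iff]
          clear * -
          grind only)
  · right; right
    have hnd : ∀ d ∈ D7, ¬ G.Adj a d := by
      intro d hd
      have := core d hd
      tauto
    obtain ⟨x1, x2, x3, x4, x5, x6, x7⟩ := h
    have hD := uniq c hc x1 (Or.inl x3) hnd
    have dac := dc c hc
    clear hind uniq core hcl hA dc hnbr hnd
    subst hD
    refine ⟨?_, ⟨c, rfl⟩, ?_⟩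
    · intro x hx
      simp only [Set.mem_union, Set.mem_insert_iff, Set.mem_singleton_iff] at hx
      rcases hx with (rfl | rfl | rfl | rfl | rfl | rfl) | rfl <;>
        grind only
    · exact aux_iso7 (w3 := w5) (w4 := w6) (w5 := w3) (w6 := w4) (by
          simp only [List.pairwise_cons, List.mem_cons, List.not_mem_nil, or_false,
            forall_eq_or_imp, forall_eq, List.Pairwise.nil]
          grind only)
        ⟨Hc.a51.symm, Hc.a65.symm, Hc.a26.symm, Hc.a42.symm, Hc.a34.symm, Hc.a13.symm, Hc.a75,
          Hc.a76, Hc.a73, Hc.a74, Hc.n12, Hc.n16, Hc.n14, Hc.n17, Hc.n25, Hc.n23, Hc.n27,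
          fun h => Hc.n35 h.symm, fun h => Hc.n45 h.symm, fun h => Hc.n36 h.symm,
          fun h => Hc.n46 h.symm⟩ x1 x2 x5 x6 x3 x4 x7 _ (by
          intro x
          simp only [Set.mem_union, Set.mem_insert_iff, Set.mem_singleton_iff]
          clear * -
          grind only)
end

section
/- Let G be a connected {K_{1,3}, Z_2, N}-free graph which contains H_6 as an induced subgraph, say with vertices labeled x_1,…,x_7 as in the definition of H_6, and write H for this induced copy. Then for each vertex a ∈ V(G) − V(H) with N_G(a) ∩ V(H) ≠ ∅, we have N_G(a) ∩ V(H) = {x_i, x_{i+1}, x_7} for some i ∈ {1,3}; consequently G[V(H) ∪ {a}] ≅ H_7. -/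
open SimpleGraph

theorem no_claw {V : Type*} {G : SimpleGraph V} (h : ¬ ContainsInduced G K13) (c x y z : V)
    : ¬ ((x ≠ y ∧ x ≠ z ∧ y ≠ z) ∧ (G.Adj c x ∧ G.Adj c y ∧ G.Adj c z) ∧
      (¬ G.Adj x y ∧ ¬ G.Adj x z ∧ ¬ G.Adj y z)) := by
  rintro ⟨⟨n1, n2, n3⟩, ⟨a1, a2, a3⟩, b1, b2, b3⟩
  have m1 := a1.ne
  have m2 := a2.ne
  have m3 := a3.ne
  refine h ⟨⟨⟨![c, x, y, z], ?_⟩, ?_⟩⟩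
  · intro i j hij
    fin_cases i <;> fin_cases j <;> simp_all
  · intro i j
    change G.Adj (![c, x, y, z] i) (![c, x, y, z] j) ↔ _
    fin_cases i <;> fin_cases j <;> simp [K13, graphOfList, *, G.adj_comm]

theorem no_Z {V : Type*} {G : SimpleGraph V} (h : ¬ ContainsInduced G (Zgraph 2))
    (p q r s t : V)
    : ¬ ((p ≠ s ∧ p ≠ t ∧ q ≠ s ∧ q ≠ t ∧ r ≠ t) ∧
      (G.Adj p q ∧ G.Adj p r ∧ G.Adj q r ∧ G.Adj r s ∧ G.Adj s t) ∧
      (¬ G.Adj p s ∧ ¬ G.Adj p t ∧ ¬ G.Adj q s ∧ ¬ G.Adj q t ∧ ¬ G.Adj r t)) := by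
  rintro ⟨⟨n1, n2, n3, n4, n5⟩, ⟨a1, a2, a3, a4, a5⟩, b1, b2, b3, b4, b5⟩
  have m1 := a1.ne
  have m2 := a2.ne
  have m3 := a3.ne
  have m4 := a4.ne
  have m5 := a5.ne
  refine h ⟨⟨⟨![p, q, r, s, t], ?_⟩, ?_⟩⟩
  · intro i j hij
    change Fin 5 at i
    change Fin 5 at j
    fin_cases i <;> fin_cases j <;> simp_all
  · intro i j
    change Fin 5 at i
    change Fin 5 at j
    change G.Adj (![p, q, r, s, t] i) (![p, q, r, s, t] j) ↔ _
    fin_cases i <;> fin_cases j <;> simp [Zgraph, *]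
    all_goals first | assumption | (rw [G.adj_comm]; assumption)

/-- An isomorphism from a bijective description of the vertices. -/
theorem iso_of {V : Type*} {G : SimpleGraph V} (f : Fin 7 → V) (a : V)
    (g : Fin 8 → V) (hg : Function.Injective g)
    (hr : Set.range g = Set.range f ∪ {a})
    (hadj : ∀ i j, G.Adj (g i) (g j) ↔ HGraph7.Adj i j) :
    Nonempty ((G.induce (Set.range f ∪ {a})) ≃g HGraph7) := by
  rw [← hr]
  refine ⟨RelIso.symm ⟨Equiv.ofInjective g hg, ?_⟩⟩
  intro i j
  simpa using hadj i j

theorem key_core {V : Type*} (G : SimpleGraph V)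
    (hK13 : ¬ ContainsInduced G K13) (hZ2 : ¬ ContainsInduced G (Zgraph 2))
    (f : Fin 7 → V) (fi : ∀ i j, f i = f j ↔ i = j)
    (fA : ∀ i j, G.Adj (f i) (f j) ↔ HGraph6.Adj i j) (a : V) (fa : ∀ i, f i ≠ a)
    (hnbr : ∃ i, G.Adj a (f i)) :
    ((∀ j : Fin 7, G.Adj a (f j) ↔ (j = 0 ∨ j = 1 ∨ j = 6)) ∨
      (∀ j : Fin 7, G.Adj a (f j) ↔ (j = 2 ∨ j = 3 ∨ j = 6))) := by
  have af : ∀ i, a ≠ f i := fun i h => fa i h.symm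
  have sa : ∀ i, G.Adj (f i) a ↔ G.Adj a (f i) := fun i => G.adj_comm _ _
  have hn : G.Adj a (f 0) ∨ G.Adj a (f 1) ∨ G.Adj a (f 2) ∨ G.Adj a (f 3) ∨ G.Adj a (f 4) ∨
      G.Adj a (f 5) ∨ G.Adj a (f 6) := by
    obtain ⟨i, h⟩ := hnbr
    fin_cases i <;> simp_all
  have c0 := no_claw hK13 (f 0) (f 1) (f 2) a
  have c1 := no_claw hK13 (f 1) (f 0) (f 3) a
  have c2 := no_claw hK13 (f 2) (f 3) (f 4) a
  have c3 := no_claw hK13 (f 3) (f 2) (f 5) a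
  have c4 := no_claw hK13 (f 4) (f 0) (f 6) a
  have c5 := no_claw hK13 a (f 0) (f 3) (f 6)
  have c6 := no_Z hZ2 (f 3) a (f 2) (f 4) (f 6)
  have c7 := no_Z hZ2 (f 6) a (f 4) (f 0) (f 1)
  have c8 := no_claw hK13 a (f 1) (f 2) (f 6)
  have c9 := no_Z hZ2 (f 0) (f 2) (f 4) (f 5) a
  have c10 := no_Z hZ2 (f 0) a (f 4) (f 5) (f 3)
  have c11 := no_claw hK13 (f 5) (f 3) (f 6) a
  have c12 := no_Z hZ2 (f 1) (f 3) a (f 4) (f 6)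
  have c13 := no_Z hZ2 (f 1) a (f 0) (f 4) (f 6)
  have c14 := no_Z hZ2 (f 5) (f 6) a (f 0) (f 2)
  have c15 := no_claw hK13 (f 5) (f 1) (f 4) a
  have c16 := no_claw hK13 (f 5) (f 1) (f 6) a
  have c17 := no_Z hZ2 (f 0) (f 2) (f 4) (f 6) a
  have c18 := no_Z hZ2 (f 2) a (f 0) (f 1) (f 5)
  have c19 := no_Z hZ2 (f 4) a (f 0) (f 1) (f 3)
  have c20 := no_Z hZ2 (f 5) a (f 1) (f 0) (f 2)
  simp [fa, af, fi, fA, sa, HGraph6, graphOfList] at c0 c1 c2 c3 c4 c5 c6 c7 c8 c9 c10 c11 c12 c13 c14 c15 c16 c17 c18 c19 c20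
  simp only [Fin.forall_fin_succ, Fin.forall_fin_zero]
  simp
  clear fa af fi fA sa hnbr
  generalize G.Adj a (f 0) = p0 at *
  generalize G.Adj a (f 1) = p1 at *
  generalize G.Adj a (f 2) = p2 at *
  generalize G.Adj a (f 3) = p3 at *
  generalize G.Adj a (f 4) = p4 at *
  generalize G.Adj a (f 5) = p5 at *
  generalize G.Adj a (f 6) = p6 at *
  clear hK13 hZ2
  by_cases h0 : p0 <;> by_cases h1 : p1 <;> by_cases h2 : p2 <;> by_cases h3 : p3 <;>
    by_cases h4 : p4 <;> by_cases h5 : p5 <;> by_cases h6 : p6 <;> simp_all only [not_true_eq_false, not_false_eq_true, true_and, and_true, or_true, true_or, forall_const, or_false, false_or, or_self, and_self, and_false, false_and, imp_false, false_imp_iff, true_imp_iff, implies_true]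

theorem iso_core {V : Type*} (G : SimpleGraph V)
    (f : Fin 7 → V) (fi : ∀ i j, f i = f j ↔ i = j)
    (fA : ∀ i j, G.Adj (f i) (f j) ↔ HGraph6.Adj i j) (a : V) (fa : ∀ i, f i ≠ a)
    (g : Fin 7 ≃ Fin 7) (hg : ∀ i j, HGraph6.Adj (g i) (g j) ↔ HGraph6.Adj i j)
    (k : ∀ j : Fin 7, G.Adj a (f (g j)) ↔ (j = 2 ∨ j = 3 ∨ j = 6)) :
    Nonempty ((G.induce (Set.range f ∪ {a})) ≃g HGraph7) := by
  have af : ∀ i, a ≠ f i := fun i h => fa i h.symm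
  have sa : ∀ i, G.Adj (f i) a ↔ G.Adj a (f i) := fun i => G.adj_comm _ _
  refine iso_of f a
    ![f (g 0), f (g 1), f (g 2), f (g 3), f (g 4), f (g 5), a, f (g 6)] ?_ ?_ ?_
  · intro i j hij
    fin_cases i <;> fin_cases j <;> simp [fi, fa, af] at hij ⊢
  · have : Set.range f = Set.range (f ∘ g) := by simp [Set.range_comp]
    rw [this]
    ext v
    simp only [Set.mem_range, Fin.exists_fin_succ, Set.mem_union, Set.mem_singleton_iff]
    simp
    grind
  · intro i j
    fin_cases i <;> fin_cases j <;> simp [fA, sa, hg, k] <;>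
      simp [HGraph6, HGraph7, graphOfList]

def swapE : Fin 7 ≃ Fin 7 where
  toFun := ![2, 3, 0, 1, 4, 5, 6]
  invFun := ![2, 3, 0, 1, 4, 5, 6]
  left_inv := by decide
  right_inv := by decide

/-- **Lemma 2.7 (Statement 10).** Let `G` be a connected `{K_{1,3}, Z₂, N}`-free graph
containing an induced copy `H` of `H₆` (given by the embedding `f`, with `xᵢ = f (i-1)`).
Then every `a ∈ V(G) − V(H)` with `N_G(a) ∩ V(H) ≠ ∅` satisfies
`N_G(a) ∩ V(H) = {x_i, x_{i+1}, x₇}` for some `i ∈ {1, 3}`; consequently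
`G[V(H) ∪ {a}] ≅ H₇`. -/
theorem stmt10 {V : Type*} [Fintype V] (G : SimpleGraph V) (hconn : G.Connected)
    (hK13 : ¬ ContainsInduced G K13) (hZ2 : ¬ ContainsInduced G (Zgraph 2))
    (hN : ¬ ContainsInduced G Ngraph)
    (f : HGraph6 ↪g G) (a : V) (ha : a ∉ Set.range ⇑f)
    (hnbr : ∃ b ∈ Set.range ⇑f, G.Adj a b) :
    ((∀ j : Fin 7, G.Adj a (f j) ↔ (j = 0 ∨ j = 1 ∨ j = 6)) ∨
      (∀ j : Fin 7, G.Adj a (f j) ↔ (j = 2 ∨ j = 3 ∨ j = 6))) ∧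
    Nonempty ((G.induce (Set.range ⇑f ∪ {a})) ≃g HGraph7) := by
  have fa : ∀ i, f i ≠ a := fun i h => ha ⟨i, h⟩
  have fi : ∀ i j, f i = f j ↔ i = j := fun i j => f.injective.eq_iff
  have fA : ∀ i j, G.Adj (f i) (f j) ↔ HGraph6.Adj i j := fun i j => f.map_adj_iff
  have key := key_core G hK13 hZ2 f fi fA a fa (by
    obtain ⟨_, ⟨i, rfl⟩, h⟩ := hnbr
    exact ⟨i, h⟩)
  refine ⟨key, ?_⟩
  rcases key with k | k
  · refine iso_core G f fi fA a fa swapE ?_ ?_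
    · intro i j
      fin_cases i <;> fin_cases j <;> simp [swapE, HGraph6, graphOfList]
    · intro j
      rw [k]
      fin_cases j <;> simp [swapE]
  · exact iso_core G f fi fA a fa (Equiv.refl _) (fun _ _ => Iff.rfl) k
end

section
/- Let G be a connected {K_{1,3}, Z_2, N}-free graph which contains H_7 as an induced subgraph, say with vertices labeled y_1,…,y_8 as in the definition of H_7, and write H for this induced copy. Then for each vertex a ∈ V(G) − V(H) with N_G(a) ∩ V(H) ≠ ∅, we have N_G(a) ∩ V(H) = {y_1, y_2, y_7, y_8}; consequently G[V(H) ∪ {a}] ≅ H_8. -/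
open SimpleGraph

/-- The graph `H₈`: `H₇` together with a new vertex `y₉ = 8` adjacent to exactly
`y₁,y₂,y₇,y₈`. -/
def HGraph8 : SimpleGraph (Fin 9) :=
  graphOfList 9 [(0,1), (0,2), (0,4), (1,3), (1,5), (2,3), (2,4), (2,6), (3,5), (3,6),
    (4,5), (4,7), (5,7), (6,7), (8,0), (8,1), (8,6), (8,7)]

lemma adj7_iff (i j : Fin 8) : HGraph7.Adj i j ↔
    ((i, j) ∈ [((0 : Fin 8), (1 : Fin 8)), (0,2), (0,4), (1,3), (1,5), (2,3), (2,4), (2,6), (3,5), (3,6),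
    (4,5), (4,7), (5,7), (6,7)] ∨ (j, i) ∈ [((0 : Fin 8), (1 : Fin 8)), (0,2), (0,4), (1,3), (1,5), (2,3), (2,4), (2,6), (3,5), (3,6),
    (4,5), (4,7), (5,7), (6,7)]) := by
  unfold HGraph7 graphOfList
  rw [SimpleGraph.fromRel_adj]
  revert i j
  decide

lemma claw_free_s11 {V : Type*} (G : SimpleGraph V) (h : ¬ ContainsInduced G K13)
    (v : Fin 4 → V) (hv : Function.Injective v)
    (h1 : G.Adj (v 0) (v 1)) (h2 : G.Adj (v 0) (v 2)) (h3 : G.Adj (v 0) (v 3))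
    (h4 : ¬ G.Adj (v 1) (v 2)) (h5 : ¬ G.Adj (v 1) (v 3)) (h6 : ¬ G.Adj (v 2) (v 3)) : False := by
  refine h ⟨⟨⟨v, hv⟩, ?_⟩⟩
  intro i j
  fin_cases i <;> fin_cases j <;>
    simp [K13, graphOfList, h1, h2, h3, h4, h5, h6, h1.symm, h2.symm, h3.symm,
      mt G.adj_symm h4, mt G.adj_symm h5, mt G.adj_symm h6]

lemma z_free {V : Type*} (G : SimpleGraph V) (h : ¬ ContainsInduced G (Zgraph 2))
    (v : Fin 5 → V) (hv : Function.Injective v)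
    (h1 : G.Adj (v 0) (v 1)) (h2 : G.Adj (v 0) (v 2)) (h3 : G.Adj (v 1) (v 2))
    (h4 : G.Adj (v 2) (v 3)) (h5 : G.Adj (v 3) (v 4))
    (n1 : ¬ G.Adj (v 0) (v 3)) (n2 : ¬ G.Adj (v 0) (v 4)) (n3 : ¬ G.Adj (v 1) (v 3))
    (n4 : ¬ G.Adj (v 1) (v 4)) (n5 : ¬ G.Adj (v 2) (v 4)) : False := by
  refine h ⟨⟨⟨v, hv⟩, ?_⟩⟩
  intro i j
  fin_cases i <;> fin_cases j <;>
    simp [Zgraph, h1, h2, h3, h4, h5, h1.symm, h2.symm, h3.symm, h4.symm, h5.symm,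
      n1, n2, n3, n4, n5, mt G.adj_symm n1, mt G.adj_symm n2, mt G.adj_symm n3, mt G.adj_symm n4, mt G.adj_symm n5]

/-- the nine vertices -/
def ext9 {V : Type*} (f : Fin 8 → V) (a : V) : Fin 9 → V :=
  fun i => if h : i.val < 8 then f ⟨i.val, h⟩ else a

lemma ext9_inj {V : Type*} (f : Fin 8 → V) (hf : Function.Injective f) (a : V)
    (ha : a ∉ Set.range f) : Function.Injective (ext9 f a) := by
  intro i j h
  unfold ext9 at h
  split_ifs at h with h1 h2 h2
  · have := hf h
    simp at this
    exact Fin.ext this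
  · exact absurd ⟨_, h⟩ ha
  · exact absurd ⟨_, h.symm⟩ ha
  · exact Fin.ext (by omega)

theorem nbr_main {V : Type*} (G : SimpleGraph V)
    (hK13 : ¬ ContainsInduced G K13) (hZ2 : ¬ ContainsInduced G (Zgraph 2))
    (f : HGraph7 ↪g G) (a : V) (ha : a ∉ Set.range ⇑f)
    (hnbr : ∃ b ∈ Set.range ⇑f, G.Adj a b) :
    (∀ j : Fin 8, G.Adj a (f j) ↔ (j = 0 ∨ j = 1 ∨ j = 6 ∨ j = 7)) := by
  have hadj : ∀ i j, G.Adj (f i) (f j) ↔ _ := fun i j => f.map_rel_iff.trans (adj7_iff i j)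
  have hcm : ∀ i, G.Adj (f i) a ↔ G.Adj a (f i) := fun i => G.adj_comm _ _
  have hv := ext9_inj f f.injective a ha
  have K := fun (p : Fin 4 → Fin 9) (hp : Function.Injective p) =>
    claw_free_s11 G hK13 (ext9 f a ∘ p) (hv.comp hp)
  have Z := fun (p : Fin 5 → Fin 9) (hp : Function.Injective p) =>
    z_free G hZ2 (ext9 f a ∘ p) (hv.comp hp)
  have hn : G.Adj a (f 0) ∨ G.Adj a (f 1) ∨ G.Adj a (f 2) ∨ G.Adj a (f 3) ∨ G.Adj a (f 4) ∨
      G.Adj a (f 5) ∨ G.Adj a (f 6) ∨ G.Adj a (f 7) := by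
    obtain ⟨_, ⟨j, rfl⟩, hj⟩ := hnbr
    fin_cases j <;> simp at hj <;> simp [hj]
  have c0 := K ![0, 1, 2, 8] (by decide)
  have c1 := K ![1, 0, 3, 8] (by decide)
  have c2 := K ![2, 4, 6, 8] (by decide)
  have c3 := K ![3, 2, 5, 8] (by decide)
  have c4 := K ![8, 0, 5, 6] (by decide)
  have c5 := K ![4, 0, 7, 8] (by decide)
  have c6 := K ![8, 1, 2, 7] (by decide)
  have c7 := Z ![7, 8, 4, 0, 1] (by decide)
  have c8 := K ![5, 1, 4, 8] (by decide)
  have c9 := Z ![1, 8, 0, 2, 6] (by decide)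
  have c10 := Z ![2, 8, 0, 1, 5] (by decide)
  have c11 := Z ![0, 8, 1, 5, 7] (by decide)
  have c12 := Z ![3, 8, 1, 0, 4] (by decide)
  have c13 := Z ![0, 2, 8, 5, 7] (by decide)
  have c14 := Z ![1, 5, 3, 6, 8] (by decide)
  have c15 := K ![8, 1, 4, 6] (by decide)
  have c16 := Z ![6, 8, 2, 0, 1] (by decide)
  have c17 := K ![3, 1, 6, 8] (by decide)
  have c18 := K ![7, 4, 6, 8] (by decide)
  have c19 := Z ![4, 8, 0, 1, 3] (by decide)
  have c20 := Z ![5, 8, 1, 0, 2] (by decide)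
  clear K Z
  simp [ext9, hadj, hcm] at c0 c1 c2 c3 c4 c5 c6 c7 c8 c9 c10 c11 c12 c13 c14 c15 c16 c17 c18 c19 c20
  clear hadj hcm hv
  generalize h0 : G.Adj a (f 0) = p0 at *
  generalize h1 : G.Adj a (f 1) = p1 at *
  generalize h2 : G.Adj a (f 2) = p2 at *
  generalize h3 : G.Adj a (f 3) = p3 at *
  generalize h4 : G.Adj a (f 4) = p4 at *
  generalize h5 : G.Adj a (f 5) = p5 at *
  generalize h6 : G.Adj a (f 6) = p6 at *
  generalize h7 : G.Adj a (f 7) = p7 at *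
  have key : p0 ∧ p1 ∧ ¬ p2 ∧ ¬ p3 ∧ ¬ p4 ∧ ¬ p5 ∧ p6 ∧ p7 := by
    clear h0 h1 h2 h3 h4 h5 h6 h7
    clear hnbr ha
    by_cases q0 : p0 <;> by_cases q1 : p1 <;> by_cases q2 : p2 <;> by_cases q4 : p4 <;>
      by_cases q5 : p5 <;> by_cases q6 : p6 <;> simp_all
  obtain ⟨k0, k1, k2, k3, k4, k5, k6, k7⟩ := key
  intro j
  fin_cases j <;> simp [h0, h1, h2, h3, h4, h5, h6, h7, k0, k1, k2, k3, k4, k5, k6, k7]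

/-- **Lemma 2.8 (Statement 11).** Let `G` be a connected `{K_{1,3}, Z₂, N}`-free graph
containing an induced copy `H` of `H₇` (given by the embedding `f`, with `yᵢ = f (i-1)`).
Then every `a ∈ V(G) − V(H)` with `N_G(a) ∩ V(H) ≠ ∅` satisfies
`N_G(a) ∩ V(H) = {y₁, y₂, y₇, y₈}`; consequently `G[V(H) ∪ {a}] ≅ H₈`. -/
theorem stmt11 {V : Type*} [Fintype V] (G : SimpleGraph V) (hconn : G.Connected)
    (hK13 : ¬ ContainsInduced G K13) (hZ2 : ¬ ContainsInduced G (Zgraph 2))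
    (hN : ¬ ContainsInduced G Ngraph)
    (f : HGraph7 ↪g G) (a : V) (ha : a ∉ Set.range ⇑f)
    (hnbr : ∃ b ∈ Set.range ⇑f, G.Adj a b) :
    (∀ j : Fin 8, G.Adj a (f j) ↔ (j = 0 ∨ j = 1 ∨ j = 6 ∨ j = 7)) ∧
    Nonempty ((G.induce (Set.range ⇑f ∪ {a})) ≃g HGraph8) := by
  have hmain := nbr_main G hK13 hZ2 f a ha hnbr
  refine ⟨hmain, ?_⟩
  have hv := ext9_inj f f.injective a ha
  have hr : Set.range (ext9 f a) = Set.range f ∪ {a} := by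
    ext x
    constructor
    · rintro ⟨i, rfl⟩
      unfold ext9
      split_ifs with h
      · exact Or.inl ⟨_, rfl⟩
      · exact Or.inr rfl
    · rintro (⟨i, rfl⟩ | rfl)
      · exact ⟨i.castSucc, by simp [ext9]⟩
      · exact ⟨8, by simp [ext9]⟩
  rw [← hr]
  have hadj : ∀ i j, G.Adj (f i) (f j) ↔ _ := fun i j => f.map_rel_iff.trans (adj7_iff i j)
  have hcm : ∀ i, G.Adj (f i) a ↔ G.Adj a (f i) := fun i => G.adj_comm _ _
  refine ⟨RelIso.symm ⟨Equiv.ofInjective _ hv, ?_⟩⟩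
  intro i j
  simp only [Equiv.ofInjective_apply, SimpleGraph.comap_adj, Function.Embedding.subtype_apply]
  fin_cases i <;> fin_cases j <;>
    simp [ext9, hadj, hcm, hmain, HGraph8, graphOfList]
end

section
/- Let G be a K_{1,3}-free graph, let H be an induced subgraph of G that is a fat l-path or a fat l-cycle with l ≥ 5, and let a ∈ V(G) − V(H). Then the neighborhood N_G(a) intersects at most four of the fundamental cliques of H. -/
open SimpleGraph

/-- `B_{1,m} = N_{1,m,0}`: a triangle `0,1,2`, a pendant vertex `3` attached to `0`,
and a path `4,5,…,m+3` of length `m` attached at the vertex `1`. -/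
def Bgraph (m : ℕ) : SimpleGraph (Fin (m + 4)) :=
  SimpleGraph.fromRel (fun a b =>
    (a.val = 0 ∧ b.val = 1) ∨ (a.val = 0 ∧ b.val = 2) ∨ (a.val = 1 ∧ b.val = 2) ∨
    (a.val = 0 ∧ b.val = 3) ∨ (a.val = 1 ∧ b.val = 4) ∨
    (4 ≤ a.val ∧ b.val = a.val + 1))

/-- The cliques `L 0, …, L (l-1)` form an (induced) fat `l`-path decomposition:
they are nonempty, pairwise disjoint, and two distinct vertices lying in them are adjacent
iff they lie in the same clique or in consecutive cliques. -/
def IsFatPathDecomp {V : Type*} (G : SimpleGraph V) (l : ℕ) (L : Fin l → Set V) : Prop :=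
  (∀ i, (L i).Nonempty) ∧
  (∀ i j, i ≠ j → Disjoint (L i) (L j)) ∧
  (∀ (i j : Fin l) (u v : V), u ∈ L i → v ∈ L j → u ≠ v →
    (G.Adj u v ↔ i = j ∨ (i : ℕ) + 1 = (j : ℕ) ∨ (j : ℕ) + 1 = (i : ℕ)))

/-- The cliques `L 0, …, L l` form an (induced) fat `l`-cycle decomposition:
they are nonempty, pairwise disjoint, and two distinct vertices lying in them are adjacent
iff they lie in the same clique or in (cyclically) consecutive cliques. -/
def IsFatCycleDecomp {V : Type*} (G : SimpleGraph V) (l : ℕ) (L : Fin (l + 1) → Set V) : Prop :=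
  (∀ i, (L i).Nonempty) ∧
  (∀ i j, i ≠ j → Disjoint (L i) (L j)) ∧
  (∀ (i j : Fin (l + 1)) (u v : V), u ∈ L i → v ∈ L j → u ≠ v →
    (G.Adj u v ↔ i = j ∨ ((i : ℕ) + 1) % (l + 1) = (j : ℕ) ∨ ((j : ℕ) + 1) % (l + 1) = (i : ℕ)))

/-- `G` is a fat `l`-path (so `l ≥ 5` and the fundamental cliques cover `G`). -/
def IsFatPath {V : Type*} (G : SimpleGraph V) (l : ℕ) : Prop :=
  5 ≤ l ∧ ∃ L : Fin l → Set V, IsFatPathDecomp G l L ∧ ∀ v : V, ∃ i, v ∈ L i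

/-- `G` is a fat `l`-cycle (so `l ≥ 5` and the `l+1` fundamental cliques cover `G`). -/
def IsFatCycle {V : Type*} (G : SimpleGraph V) (l : ℕ) : Prop :=
  5 ≤ l ∧ ∃ L : Fin (l + 1) → Set V, IsFatCycleDecomp G l L ∧ ∀ v : V, ∃ i, v ∈ L i

/-- `G` belongs to the family `𝒫(p)` of all fat `i`-paths and fat `i`-cycles with `i ≥ p`. -/
def MemFatFamily {V : Type*} (G : SimpleGraph V) (p : ℕ) : Prop :=
  ∃ l, p ≤ l ∧ (IsFatPath G l ∨ IsFatCycle G l)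


theorem aux_claw_s12 {V : Type*} (G : SimpleGraph V) (hK : ¬ ContainsInduced G K13) (a x y z : V)
    (hx : G.Adj a x) (hy : G.Adj a y) (hz : G.Adj a z)
    (nxy : x ≠ y) (nxz : x ≠ z) (nyz : y ≠ z)
    (axy : ¬ G.Adj x y) (axz : ¬ G.Adj x z) (ayz : ¬ G.Adj y z) : False := by
  apply hK
  have h1 := hx.ne
  have h2 := hy.ne
  have h3 := hz.ne
  refine ⟨⟨⟨![a, x, y, z], ?_⟩, ?_⟩⟩
  · intro i j h
    fin_cases i <;> fin_cases j <;> simp_all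
  · intro i j
    change G.Adj (![a, x, y, z] i) (![a, x, y, z] j) ↔ _
    have s1 := hx.symm
    have s2 := hy.symm
    have s3 := hz.symm
    have t1 : ¬ G.Adj y x := fun h => axy h.symm
    have t2 : ¬ G.Adj z x := fun h => axz h.symm
    have t3 : ¬ G.Adj z y := fun h => ayz h.symm
    clear hK
    fin_cases i <;> fin_cases j <;>
      simp_all [K13, graphOfList]

theorem aux_five {n : ℕ} (S : Set (Fin n)) (h : ¬ S.ncard ≤ 4) :
    ∃ p q r s t : Fin n, p ∈ S ∧ q ∈ S ∧ r ∈ S ∧ s ∈ S ∧ t ∈ S ∧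
      (p : ℕ) < q ∧ (q : ℕ) < r ∧ (r : ℕ) < s ∧ (s : ℕ) < t := by
  classical
  have h5 : 5 ≤ S.toFinset.card := by
    rw [← Set.ncard_eq_toFinset_card']; omega
  obtain ⟨T, hT, hc⟩ := Finset.exists_subset_card_eq h5
  let f := T.orderEmbOfFin hc
  have hf : ∀ i, f i ∈ S := fun i => by
    have := hT (Finset.orderEmbOfFin_mem T hc i)
    simpa using this
  have hm : ∀ i j, i < j → (f i : ℕ) < f j := fun i j hij => f.strictMono hij
  exact ⟨f 0, f 1, f 2, f 3, f 4, hf _, hf _, hf _, hf _, hf _,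
    hm _ _ (by decide), hm _ _ (by decide), hm _ _ (by decide), hm _ _ (by decide)⟩

theorem aux_mod (n i j : ℕ) (hi : i < n) (hj : j < n) (h : (i + 1) % n = j) :
    i + 1 = j ∨ (i + 1 = n ∧ j = 0) := by
  rcases Nat.lt_or_ge (i + 1) n with h' | h'
  · rw [Nat.mod_eq_of_lt h'] at h; exact Or.inl h
  · have : i + 1 = n := by omega
    rw [this, Nat.mod_self] at h; omega

/-- **Claim 3.1 (Statement 12).** Let `G` be a `K_{1,3}`-free graph and let `H` be an
induced subgraph of `G` which is a fat `l`-path or a fat `l`-cycle with `l ≥ 5`, and let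
`a ∈ V(G) − V(H)`.  Then `N_G(a)` intersects at most four fundamental cliques of `H`. -/
theorem stmt12 {V : Type*} [Fintype V] (G : SimpleGraph V)
    (hK13 : ¬ ContainsInduced G K13) (l : ℕ) (hl : 5 ≤ l) (a : V) :
    (∀ L : Fin l → Set V, IsFatPathDecomp G l L → (∀ i, a ∉ L i) →
      {i : Fin l | ∃ u ∈ L i, G.Adj a u}.ncard ≤ 4) ∧
    (∀ L : Fin (l + 1) → Set V, IsFatCycleDecomp G l L → (∀ i, a ∉ L i) →
      {i : Fin (l + 1) | ∃ u ∈ L i, G.Adj a u}.ncard ≤ 4) := by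
  constructor
  · intro L hL _
    obtain ⟨_, hd, hadj⟩ := hL
    by_contra hS
    obtain ⟨p, q, r, s, t, ⟨x, hx, ax⟩, _, ⟨y, hy, ay⟩, _, ⟨z, hz, az⟩, h1, h2, h3, h4⟩ :=
      aux_five _ hS
    have key : ∀ (i j : Fin l) (u v : V), u ∈ L i → v ∈ L j → (i : ℕ) + 1 < j →
        u ≠ v ∧ ¬ G.Adj u v := by
      intro i j u v hu hv hij
      have hne : i ≠ j := by rintro rfl; omega
      have huv : u ≠ v := (hd i j hne).ne_of_mem hu hv
      refine ⟨huv, fun h => ?_⟩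
      rcases (hadj i j u v hu hv huv).1 h with h | h | h
      · exact hne h
      · omega
      · omega
    obtain ⟨a1, b1⟩ := key p r x y hx hy (by omega)
    obtain ⟨a2, b2⟩ := key p t x z hx hz (by omega)
    obtain ⟨a3, b3⟩ := key r t y z hy hz (by omega)
    exact aux_claw_s12 G hK13 a x y z ax ay az a1 a2 a3 b1 b2 b3
  · intro L hL _
    obtain ⟨_, hd, hadj⟩ := hL
    by_contra hS
    obtain ⟨p, q, r, s, t, hp, hq, hr, hs, ht, h1, h2, h3, h4⟩ := aux_five _ hS
    have key : ∀ (i j : Fin (l + 1)) (u v : V), u ∈ L i → v ∈ L j → (i : ℕ) + 1 < j →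
        ((j : ℕ) < l + i) → u ≠ v ∧ ¬ G.Adj u v := by
      intro i j u v hu hv hij hij'
      have hne : i ≠ j := by rintro rfl; omega
      have huv : u ≠ v := (hd i j hne).ne_of_mem hu hv
      refine ⟨huv, fun h => ?_⟩
      rcases (hadj i j u v hu hv huv).1 h with h | h | h
      · exact hne h
      · have := aux_mod _ _ _ i.2 j.2 h
        omega
      · have := aux_mod _ _ _ j.2 i.2 h
        omega
    have fin : ∀ i j k : Fin (l + 1), (∃ u ∈ L i, G.Adj a u) → (∃ u ∈ L j, G.Adj a u) →
        (∃ u ∈ L k, G.Adj a u) → (i : ℕ) + 1 < j → (j : ℕ) + 1 < k → (k : ℕ) < l + i →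
        False := by
      rintro i j k ⟨x, hx, ax⟩ ⟨y, hy, ay⟩ ⟨z, hz, az⟩ e1 e2 e3
      obtain ⟨a1, b1⟩ := key i j x y hx hy (by omega) (by omega)
      obtain ⟨a2, b2⟩ := key i k x z hx hz (by omega) (by omega)
      obtain ⟨a3, b3⟩ := key j k y z hy hz (by omega) (by omega)
      exact aux_claw_s12 G hK13 a x y z ax ay az a1 a2 a3 b1 b2 b3
    have ht' := t.2
    by_cases c0 : (t : ℕ) < l + p
    · exact fin p r t hp hr ht (by omega) (by omega) c0
    by_cases c1 : (p : ℕ) + 1 < q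
    · exact fin p q s hp hq hs (by omega) (by omega) (by omega)
    by_cases c2 : (q : ℕ) + 1 < r
    · exact fin q r t hq hr ht (by omega) (by omega) (by omega)
    by_cases c3 : (r : ℕ) + 1 < s
    · exact fin p r s hp hr hs (by omega) (by omega) (by omega)
    · exact fin q s t hq hs ht (by omega) (by omega) (by omega)
end

section
/- Let m ≥ 1 be an integer, let G be a {K_{1,3}, B_{1,m}}-free graph, let H = F_p(L_1,…,L_l) be an induced subgraph of G that is a fat l-path with l ≥ max{3m, m+4}, and let a ∈ V(G) − V(H). Let I = {i ∈ {1,…,l} : N_G(a) ∩ L_i ≠ ∅}. If there exists an index j with 2 ≤ j ≤ l−2 such that I ∩ [2, l−1] = {j, j+1}, then either (j = 2 and 1 ∈ I) or (j = l−2 and l ∈ I). -/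
open SimpleGraph

/-- The fundamental clique with (1-based) index `n`, i.e. the paper's `L_n`
(empty when `n ∉ {1, …, l}`). -/
def cliqueAt {V : Type*} {l : ℕ} (L : Fin l → Set V) (n : ℕ) : Set V :=
  {v | ∃ i : Fin l, (i : ℕ) + 1 = n ∧ v ∈ L i}

theorem embed_aux {V : Type*} (G : SimpleGraph V) (n : ℕ) (H : SimpleGraph (Fin n)) (l : ℕ)
    (y : ℕ → V) (P : ℕ → Prop)
    (hinj : ∀ p q, p ≤ l → q ≤ l → y p = y q → p = q)
    (hadj : ∀ p q, p ≤ l → q ≤ l → (G.Adj (y p) (y q) ↔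
      (1 ≤ p ∧ 1 ≤ q ∧ (p + 1 = q ∨ q + 1 = p)) ∨ (p = 0 ∧ 1 ≤ q ∧ P q) ∨ (q = 0 ∧ 1 ≤ p ∧ P p)))
    (g : ℕ → ℕ) (hg : ∀ k, k < n → g k ≤ l)
    (hginj : ∀ p q, p < n → q < n → g p = g q → p = q)
    (hH : ∀ p q : Fin n, H.Adj p q ↔
      (1 ≤ g p ∧ 1 ≤ g q ∧ (g p + 1 = g q ∨ g q + 1 = g p)) ∨ (g p = 0 ∧ 1 ≤ g q ∧ P (g q)) ∨
        (g q = 0 ∧ 1 ≤ g p ∧ P (g p))) : ContainsInduced G H := by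
  refine ⟨⟨⟨fun k => y (g k), ?_⟩, ?_⟩⟩
  · intro p q h
    exact Fin.ext (hginj _ _ p.2 q.2 (hinj _ _ (hg _ p.2) (hg _ q.2) h))
  · intro p q
    rw [hH]
    exact hadj _ _ (hg _ p.2) (hg _ q.2)

def gR (j k : ℕ) : ℕ :=
  if k = 0 then j else if k = 1 then j + 1 else if k = 2 then 0 else if k = 3 then j - 1
  else j + k - 2

def gL (j k : ℕ) : ℕ :=
  if k = 0 then j + 1 else if k = 1 then j else if k = 2 then 0 else if k = 3 then j + 2
  else j + 3 - k

def gC (j l k : ℕ) : ℕ :=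
  if k = 0 then 0 else if k = 1 then 1 else if k = 2 then j else l

theorem B_adj (m : ℕ) (p q : Fin (m+4)) : (Bgraph m).Adj p q ↔ 
    ((p.val = 0 ∧ q.val = 1) ∨ (p.val = 0 ∧ q.val = 2) ∨ (p.val = 1 ∧ q.val = 2) ∨
    (p.val = 0 ∧ q.val = 3) ∨ (p.val = 1 ∧ q.val = 4) ∨
    (4 ≤ p.val ∧ q.val = p.val + 1)) ∨ 
    ((q.val = 0 ∧ p.val = 1) ∨ (q.val = 0 ∧ p.val = 2) ∨ (q.val = 1 ∧ p.val = 2) ∨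
    (q.val = 0 ∧ p.val = 3) ∨ (q.val = 1 ∧ p.val = 4) ∨
    (4 ≤ q.val ∧ p.val = q.val + 1)) := by
  unfold Bgraph
  rw [SimpleGraph.fromRel_adj, and_iff_right_iff_imp]
  rintro h rfl
  omega

theorem K_adj (p q : Fin 4) : K13.Adj p q ↔ 
    (p.val = 0 ∧ 1 ≤ q.val) ∨ (q.val = 0 ∧ 1 ≤ p.val) := by
  unfold K13 graphOfList
  rw [SimpleGraph.fromRel_adj]
  revert p q
  decide

theorem gR_spec (j k : ℕ) : (k = 0 ∧ gR j k = j) ∨ (k = 1 ∧ gR j k = j + 1) ∨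
    (k = 2 ∧ gR j k = 0) ∨ (k = 3 ∧ gR j k = j - 1) ∨ (4 ≤ k ∧ gR j k = j + k - 2) := by
  by_cases h0 : k = 0
  · simp [gR, h0]
  by_cases h1 : k = 1
  · simp [gR, h1]
  by_cases h2 : k = 2
  · simp [gR, h2]
  by_cases h3 : k = 3
  · simp [gR, h3]
  · have : 4 ≤ k := by omega
    simp [gR, h0, h1, h2, h3, this]

set_option maxHeartbeats 1000000 in
theorem caseR {V : Type*} (G : SimpleGraph V) (m l j : ℕ)
    (y : ℕ → V) (P : ℕ → Prop)
    (hinj : ∀ p q, p ≤ l → q ≤ l → y p = y q → p = q)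
    (hadj : ∀ p q, p ≤ l → q ≤ l → (G.Adj (y p) (y q) ↔
      (1 ≤ p ∧ 1 ≤ q ∧ (p + 1 = q ∨ q + 1 = p)) ∨ (p = 0 ∧ 1 ≤ q ∧ P q) ∨ (q = 0 ∧ 1 ≤ p ∧ P p)))
    (hj : 2 ≤ j) (hjl : j + 1 + m ≤ l)
    (hP : ∀ q, j - 1 ≤ q → q ≤ j + 1 + m → (P q ↔ q = j ∨ q = j + 1)) :
    ContainsInduced G (Bgraph m) := by
  have hr : ∀ k, k < m + 4 → 1 ≤ gR j k → (P (gR j k) ↔ gR j k = j ∨ gR j k = j + 1) := by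
    intro k hk h1
    apply hP <;> (have := gR_spec j k; omega)
  apply embed_aux G _ _ l y P hinj hadj (gR j)
  · intro k hk
    have := gR_spec j k
    omega
  · intro p q hp hq
    have h1 := gR_spec j p
    have h2 := gR_spec j q
    omega
  · intro p q
    rw [B_adj]
    have h1 : ∀ k, k < m + 4 → (1 ≤ gR j k ∧ P (gR j k) ↔ k = 0 ∨ k = 1) := by
      intro k hk
      constructor
      · rintro ⟨h, h'⟩
        have := (hr k hk h).1 h'
        have := gR_spec j k
        omega
      · intro h
        have h3 : 1 ≤ gR j k := by have := gR_spec j k; omega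
        refine ⟨h3, (hr k hk h3).2 ?_⟩
        have := gR_spec j k
        omega
    rw [h1 _ p.2, h1 _ q.2]
    have hp := p.2
    have hq := q.2
    generalize p.val = p at *
    generalize q.val = q at *
    clear hr h1 hP hadj hinj
    have e1 := gR_spec j p
    have e2 := gR_spec j q
    generalize gR j p = x at *
    generalize gR j q = z at *
    rcases e1 with ⟨h1, h2⟩ | ⟨h1, h2⟩ | ⟨h1, h2⟩ | ⟨h1, h2⟩ | ⟨h1, h2⟩ <;>
    rcases e2 with ⟨h3, h4⟩ | ⟨h3, h4⟩ | ⟨h3, h4⟩ | ⟨h3, h4⟩ | ⟨h3, h4⟩ <;>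
    grind (splits := 40)

theorem gL_spec (j k : ℕ) : (k = 0 ∧ gL j k = j + 1) ∨ (k = 1 ∧ gL j k = j) ∨
    (k = 2 ∧ gL j k = 0) ∨ (k = 3 ∧ gL j k = j + 2) ∨ (4 ≤ k ∧ gL j k = j + 3 - k) := by
  by_cases h0 : k = 0
  · simp [gL, h0]
  by_cases h1 : k = 1
  · simp [gL, h1]
  by_cases h2 : k = 2
  · simp [gL, h2]
  by_cases h3 : k = 3
  · simp [gL, h3]
  · have : 4 ≤ k := by omega
    simp [gL, h0, h1, h2, h3, this]

set_option maxHeartbeats 1000000 in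
theorem caseL {V : Type*} (G : SimpleGraph V) (m l j : ℕ)
    (y : ℕ → V) (P : ℕ → Prop)
    (hinj : ∀ p q, p ≤ l → q ≤ l → y p = y q → p = q)
    (hadj : ∀ p q, p ≤ l → q ≤ l → (G.Adj (y p) (y q) ↔
      (1 ≤ p ∧ 1 ≤ q ∧ (p + 1 = q ∨ q + 1 = p)) ∨ (p = 0 ∧ 1 ≤ q ∧ P q) ∨ (q = 0 ∧ 1 ≤ p ∧ P p)))
    (hj : m + 1 ≤ j) (hjl : j + 2 ≤ l) (hm : 1 ≤ m)
    (hP : ∀ q, j - m ≤ q → q ≤ j + 2 → (P q ↔ q = j ∨ q = j + 1)) :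
    ContainsInduced G (Bgraph m) := by
  have hr : ∀ k, k < m + 4 → 1 ≤ gL j k → (P (gL j k) ↔ gL j k = j ∨ gL j k = j + 1) := by
    intro k hk h1
    apply hP <;> (have := gL_spec j k; omega)
  apply embed_aux G _ _ l y P hinj hadj (gL j)
  · intro k hk
    have := gL_spec j k
    omega
  · intro p q hp hq
    have h1 := gL_spec j p
    have h2 := gL_spec j q
    omega
  · intro p q
    rw [B_adj]
    have h1 : ∀ k, k < m + 4 → (1 ≤ gL j k ∧ P (gL j k) ↔ k = 0 ∨ k = 1) := by
      intro k hk
      constructor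
      · rintro ⟨h, h'⟩
        have := (hr k hk h).1 h'
        have := gL_spec j k
        omega
      · intro h
        have h3 : 1 ≤ gL j k := by have := gL_spec j k; omega
        refine ⟨h3, (hr k hk h3).2 ?_⟩
        have := gL_spec j k
        omega
    rw [h1 _ p.2, h1 _ q.2]
    have hp := p.2
    have hq := q.2
    generalize p.val = p at *
    generalize q.val = q at *
    clear hr h1 hP hadj hinj
    have e1 := gL_spec j p
    have e2 := gL_spec j q
    generalize gL j p = x at *
    generalize gL j q = z at *
    rcases e1 with ⟨h1, h2⟩ | ⟨h1, h2⟩ | ⟨h1, h2⟩ | ⟨h1, h2⟩ | ⟨h1, h2⟩ <;>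
    rcases e2 with ⟨h3, h4⟩ | ⟨h3, h4⟩ | ⟨h3, h4⟩ | ⟨h3, h4⟩ | ⟨h3, h4⟩ <;>
    grind (splits := 40)

theorem gC_spec (j l k : ℕ) : (k = 0 ∧ gC j l k = 0) ∨ (k = 1 ∧ gC j l k = 1) ∨
    (k = 2 ∧ gC j l k = j) ∨ (3 ≤ k ∧ gC j l k = l) := by
  by_cases h0 : k = 0
  · simp [gC, h0]
  by_cases h1 : k = 1
  · simp [gC, h1]
  by_cases h2 : k = 2
  · simp [gC, h2]
  · have : 3 ≤ k := by omega
    simp [gC, h0, h1, h2, this]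

theorem caseC {V : Type*} (G : SimpleGraph V) (l j : ℕ)
    (y : ℕ → V) (P : ℕ → Prop)
    (hinj : ∀ p q, p ≤ l → q ≤ l → y p = y q → p = q)
    (hadj : ∀ p q, p ≤ l → q ≤ l → (G.Adj (y p) (y q) ↔
      (1 ≤ p ∧ 1 ≤ q ∧ (p + 1 = q ∨ q + 1 = p)) ∨ (p = 0 ∧ 1 ≤ q ∧ P q) ∨ (q = 0 ∧ 1 ≤ p ∧ P p)))
    (hj : 3 ≤ j) (hjl : j + 2 ≤ l) (h1 : P 1) (hjP : P j) (hlP : P l) :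
    ContainsInduced G K13 := by
  apply embed_aux G _ _ l y P hinj hadj (gC j l)
  · intro k hk
    unfold gC; split_ifs <;> omega
  · intro p q hp hq
    have h1 := gC_spec j l p
    have h2 := gC_spec j l q
    omega
  · intro p q
    rw [K_adj]
    have h1 : ∀ k, k < 4 → (1 ≤ gC j l k ∧ P (gC j l k) ↔ 1 ≤ k) := by
      intro k hk
      constructor
      · rintro ⟨h, h'⟩
        revert h; unfold gC; split_ifs <;> omega
      · intro h
        unfold gC; split_ifs
        · omega
        · exact ⟨le_rfl, h1⟩
        · exact ⟨by omega, hjP⟩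
        · exact ⟨by omega, hlP⟩
    rw [h1 _ p.2, h1 _ q.2]
    have hp := p.2
    have hq := q.2
    generalize p.val = p at *
    generalize q.val = q at *
    clear h1 hadj hinj
    have e1 := gC_spec j l p
    have e2 := gC_spec j l q
    generalize gC j l p = x at *
    generalize gC j l q = z at *
    rcases e1 with ⟨h1, h2⟩ | ⟨h1, h2⟩ | ⟨h1, h2⟩ | ⟨h1, h2⟩ <;>
    rcases e2 with ⟨h3, h4⟩ | ⟨h3, h4⟩ | ⟨h3, h4⟩ | ⟨h3, h4⟩ <;>
    grind (splits := 40)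

/-- **Claim 3.2 (Statement 13).** Let `m ≥ 1`, let `G` be `{K_{1,3}, B_{1,m}}`-free, let
`H = F_p(L_1,…,L_l)` be an induced fat `l`-path in `G` with `l ≥ max{3m, m+4}` (with the
paper's 1-based indexing `L_n = cliqueAt L n`), and let `a ∈ V(G) − V(H)`.  Let
`I = {n : N_G(a) ∩ L_n ≠ ∅}`.  If `I ∩ [2, l−1] = {j, j+1}` for some `2 ≤ j ≤ l−2`, then
either `j = 2` and `1 ∈ I`, or `j = l−2` and `l ∈ I`. -/
theorem stmt13 {V : Type*} [Fintype V] (m : ℕ) (hm : 1 ≤ m) (G : SimpleGraph V)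
    (hK13 : ¬ ContainsInduced G K13) (hB1m : ¬ ContainsInduced G (Bgraph m))
    (l : ℕ) (hl : max (3 * m) (m + 4) ≤ l) (L : Fin l → Set V)
    (hL : IsFatPathDecomp G l L) (a : V) (ha : ∀ i, a ∉ L i)
    (j : ℕ) (hj1 : 2 ≤ j) (hj2 : j ≤ l - 2)
    (hI : {n : ℕ | ∃ u ∈ cliqueAt L n, G.Adj a u} ∩ Set.Icc 2 (l - 1) = {j, j + 1}) :
    (j = 2 ∧ 1 ∈ {n : ℕ | ∃ u ∈ cliqueAt L n, G.Adj a u}) ∨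
    (j = l - 2 ∧ l ∈ {n : ℕ | ∃ u ∈ cliqueAt L n, G.Adj a u}) := by
  classical
  obtain ⟨hne, hdisj, hadjL⟩ := hL
  set I : Set ℕ := {n : ℕ | ∃ u ∈ cliqueAt L n, G.Adj a u} with hIdef
  have hl1 : 3 * m ≤ l := le_trans (le_max_left _ _) hl
  have hl2 : m + 4 ≤ l := le_trans (le_max_right _ _) hl
  have hex : ∀ n, ∃ v, 1 ≤ n → n ≤ l → (v ∈ cliqueAt L n ∧ (G.Adj a v ↔ n ∈ I)) := by
    intro n
    by_cases hn : 1 ≤ n ∧ n ≤ l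
    · by_cases hnI : n ∈ I
      · obtain ⟨u, hu, hau⟩ := hnI
        exact ⟨u, fun _ _ => ⟨hu, fun _ => ⟨u, hu, hau⟩, fun _ => hau⟩⟩
      · obtain ⟨u, hu⟩ := hne ⟨n - 1, by omega⟩
        have hu' : u ∈ cliqueAt L n := ⟨⟨n - 1, by omega⟩, by simp only; omega, hu⟩
        exact ⟨u, fun _ _ => ⟨hu', fun h => ⟨u, hu', h⟩, fun h => absurd h hnI⟩⟩
    · exact ⟨a, fun h h' => absurd ⟨h, h'⟩ hn⟩
  choose x hx using hex
  have hxinj : ∀ p q, 1 ≤ p → p ≤ l → 1 ≤ q → q ≤ l → x p = x q → p = q := by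
    intro p q hp hp' hq hq' h
    obtain ⟨i, hi, hi'⟩ := (hx p hp hp').1
    obtain ⟨k, hk, hk'⟩ := (hx q hq hq').1
    by_contra hpq
    have hik : i ≠ k := by rintro rfl; omega
    rw [h] at hi'
    exact Set.disjoint_left.1 (hdisj i k hik) hi' hk'
  have hxa : ∀ p, 1 ≤ p → p ≤ l → x p ≠ a := by
    intro p hp hp' h
    obtain ⟨i, hi, hi'⟩ := (hx p hp hp').1
    exact ha i (h ▸ hi')
  have hxadj : ∀ p q, 1 ≤ p → p ≤ l → 1 ≤ q → q ≤ l →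
      (G.Adj (x p) (x q) ↔ p + 1 = q ∨ q + 1 = p) := by
    intro p q hp hp' hq hq'
    by_cases hpq : p = q
    · subst hpq
      simp
    obtain ⟨i, hi, hi'⟩ := (hx p hp hp').1
    obtain ⟨k, hk, hk'⟩ := (hx q hq hq').1
    rw [hadjL i k _ _ hi' hk' (fun h => hpq (hxinj p q hp hp' hq hq' h)), Fin.ext_iff]
    omega
  let y : ℕ → V := fun n => if n = 0 then a else x n
  have hinj : ∀ p q, p ≤ l → q ≤ l → y p = y q → p = q := by
    intro p q hp hq h
    simp only [y] at h
    split_ifs at h with h1 h2 h2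
    · omega
    · exact absurd h.symm (hxa q (by omega) hq)
    · exact absurd h (hxa p (by omega) hp)
    · exact hxinj p q (by omega) hp (by omega) hq h
  have hadj : ∀ p q, p ≤ l → q ≤ l → (G.Adj (y p) (y q) ↔
      (1 ≤ p ∧ 1 ≤ q ∧ (p + 1 = q ∨ q + 1 = p)) ∨ (p = 0 ∧ 1 ≤ q ∧ q ∈ I) ∨
        (q = 0 ∧ 1 ≤ p ∧ p ∈ I)) := by
    intro p q hp hq
    simp only [y]
    split_ifs with h1 h2 h2
    · subst h1 h2
      simp
    · rw [(hx q (by omega) hq).2]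
      have : 1 ≤ q := by omega
      simp [h1, h2, this]
    · rw [G.adj_comm, (hx p (by omega) hp).2]
      have : 1 ≤ p := by omega
      simp [h1, h2, this]
    · rw [hxadj p q (by omega) hp (by omega) hq]
      have h3 : 1 ≤ p := by omega
      have h4 : 1 ≤ q := by omega
      simp [h1, h2, h3, h4]
  have hmid : ∀ q, 2 ≤ q → q ≤ l - 1 → (q ∈ I ↔ q = j ∨ q = j + 1) := by
    intro q h1 h2
    have : q ∈ I ∩ Set.Icc 2 (l - 1) ↔ q ∈ ({j, j + 1} : Set ℕ) := by rw [hI]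
    simp only [Set.mem_inter_iff, Set.mem_Icc, Set.mem_insert_iff, Set.mem_singleton_iff] at this
    tauto
  by_contra hcon
  push Not at hcon
  obtain ⟨hc1, hc2⟩ := hcon
  have hR : ¬ (j + 1 + m ≤ l ∧ (1 ∈ I → j ≠ 2) ∧ (l ∈ I → j + 1 + m ≤ l - 1)) := by
    rintro ⟨h1, h2, h3⟩
    refine hB1m (caseR G m l j y (· ∈ I) hinj hadj hj1 h1 ?_)
    intro q hq hq'
    by_cases hq1 : q = 1
    · subst hq1
      have : 1 ∉ I := fun h => h2 h (by omega)
      simp only [this, false_iff]; omega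
    by_cases hql : q = l
    · have : q ∉ I := fun h => by have := h3 (hql ▸ h); omega
      simp only [this, false_iff]; omega
    exact hmid q (by omega) (by omega)
  have hLf : ¬ (m + 1 ≤ j ∧ (1 ∈ I → m + 2 ≤ j) ∧ (l ∈ I → j ≠ l - 2)) := by
    rintro ⟨h1, h2, h3⟩
    refine hB1m (caseL G m l j y (· ∈ I) hinj hadj h1 (by omega) hm ?_)
    intro q hq hq'
    by_cases hq1 : q = 1
    · subst hq1
      have : 1 ∉ I := fun h => by have := h2 h; omega
      simp only [this, false_iff]; omega
    by_cases hql : q = l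
    · have : q ∉ I := fun h => h3 (hql ▸ h) (by omega)
      simp only [this, false_iff]; omega
    exact hmid q (by omega) (by omega)
  by_cases hI1 : 1 ∈ I <;> by_cases hIl : l ∈ I
  · have h2 : j ≠ 2 := fun h => hc1 h hI1
    exact hK13 (caseC G l j y (· ∈ I) hinj hadj (by omega) (by omega) hI1
      ((hmid j hj1 (by omega)).2 (Or.inl rfl)) hIl)
  all_goals
    simp only [hI1, hIl, true_imp_iff, false_imp_iff, not_true_eq_false, imp_false,
      and_true, true_and] at hc1 hc2 hR hLf
    omega
end

section
/- Let G be a K_{1,3}-free graph, let H = F_p(L_1,…,L_l) be an induced subgraph of G that is a fat l-path, and let a ∈ V(G) − V(H) be a vertex with N_G(a) ∩ V(H) ≠ ∅. Let I = {i ∈ {1,…,l} : N_G(a) ∩ L_i ≠ ∅}, and set i_1 = min I and i_2 = max I. If 2 ≤ i_1 ≤ l−1, then every vertex of L_{i_1+1} is adjacent to a; and if 2 ≤ i_2 ≤ l−1, then every vertex of L_{i_2−1} is adjacent to a. -/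
open SimpleGraph

theorem claw_aux {V : Type*} (G : SimpleGraph V) (hK13 : ¬ ContainsInduced G K13)
    (c x y z : V) (hx : G.Adj c x) (hy : G.Adj c y) (hz : G.Adj c z)
    (hxy : ¬ G.Adj x y) (hxz : ¬ G.Adj x z) (hyz : ¬ G.Adj y z)
    (nxy : x ≠ y) (nxz : x ≠ z) (nyz : y ≠ z) : False := by
  apply hK13
  have h1 := hx.ne
  have h2 := hy.ne
  have h3 := hz.ne
  refine ⟨⟨⟨![c, x, y, z], ?_⟩, ?_⟩⟩
  · intro i j h
    fin_cases i <;> fin_cases j <;> simp_all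
  · intro i j
    change G.Adj (![c, x, y, z] i) (![c, x, y, z] j) ↔ K13.Adj i j
    have h4 := hx.symm
    have h5 := hy.symm
    have h6 := hz.symm
    have h7 : ¬ G.Adj y x := fun h => hxy h.symm
    have h8 : ¬ G.Adj z x := fun h => hxz h.symm
    have h9 : ¬ G.Adj z y := fun h => hyz h.symm
    clear hK13
    fin_cases i <;> fin_cases j <;>
      simp_all [K13, graphOfList, SimpleGraph.fromRel_adj]

theorem path_aux {V : Type*} (G : SimpleGraph V) (hK13 : ¬ ContainsInduced G K13)
    (l : ℕ) (L : Fin l → Set V) (hL : IsFatPathDecomp G l L)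
    (a : V) (ha : ∀ i, a ∉ L i) (i j k : Fin l) (hij : (i : ℕ) + 1 = j) (hjk : (j : ℕ) + 1 = k)
    (w u v : V) (hw : w ∈ L i) (hu : u ∈ L j) (hv : v ∈ L k)
    (hau : G.Adj a u) (haw : ¬ G.Adj a w) (hav : ¬ G.Adj a v) : False := by
  obtain ⟨-, hd, hA⟩ := hL
  have ne : ∀ (p q : Fin l) (s t : V), s ∈ L p → t ∈ L q → (p : ℕ) ≠ q → s ≠ t := by
    rintro p q s t hs ht hpq rfl
    exact Set.disjoint_left.1 (hd p q (fun h => hpq (by rw [h]))) hs ht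
  have nuw := ne j i u w hu hw (by omega)
  have nuv := ne j k u v hu hv (by omega)
  have nwv := ne i k w v hw hv (by omega)
  refine claw_aux G hK13 u a w v hau.symm
    ((hA j i u w hu hw nuw).2 (Or.inr (Or.inr hij)))
    ((hA j k u v hu hv nuv).2 (Or.inr (Or.inl hjk))) haw hav ?_ ?_ ?_ nwv
  · intro h
    rcases (hA i k w v hw hv nwv).1 h with h | h | h
    · have := congrArg Fin.val h
      omega
    · omega
    · omega
  · rintro rfl
    exact ha _ hw
  · rintro rfl
    exact ha _ hv

/-- **Claim 3.4 (Statement 14).** Let `G` be a `K_{1,3}`-free graph, let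
`H = F_p(L_1,…,L_l)` be an induced fat `l`-path in `G` (1-based indexing,
`L_n = cliqueAt L n`), and let `a ∈ V(G) − V(H)` have a neighbour in `H`.  With
`I = {n : N_G(a) ∩ L_n ≠ ∅}`, `i₁ = min I` and `i₂ = max I`:  if `2 ≤ i₁ ≤ l−1`, then
every vertex of `L_{i₁+1}` is adjacent to `a`, and if `2 ≤ i₂ ≤ l−1`, then every vertex
of `L_{i₂−1}` is adjacent to `a`. -/
theorem stmt14 {V : Type*} [Fintype V] (G : SimpleGraph V)
    (hK13 : ¬ ContainsInduced G K13)
    (l : ℕ) (hl : 5 ≤ l) (L : Fin l → Set V) (hL : IsFatPathDecomp G l L)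
    (a : V) (ha : ∀ i, a ∉ L i) (hnbr : ∃ i, ∃ u ∈ L i, G.Adj a u) :
    (2 ≤ sInf {n : ℕ | ∃ u ∈ cliqueAt L n, G.Adj a u} →
      sInf {n : ℕ | ∃ u ∈ cliqueAt L n, G.Adj a u} ≤ l - 1 →
      ∀ u ∈ cliqueAt L (sInf {n : ℕ | ∃ u ∈ cliqueAt L n, G.Adj a u} + 1), G.Adj a u) ∧
    (2 ≤ sSup {n : ℕ | ∃ u ∈ cliqueAt L n, G.Adj a u} →
      sSup {n : ℕ | ∃ u ∈ cliqueAt L n, G.Adj a u} ≤ l - 1 →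
      ∀ u ∈ cliqueAt L (sSup {n : ℕ | ∃ u ∈ cliqueAt L n, G.Adj a u} - 1), G.Adj a u) := by
  obtain ⟨i0, u0, hu0, hau0⟩ := hnbr
  have hne : {n : ℕ | ∃ u ∈ cliqueAt L n, G.Adj a u}.Nonempty :=
    ⟨i0 + 1, u0, ⟨i0, rfl, hu0⟩, hau0⟩
  have hbd : BddAbove {n : ℕ | ∃ u ∈ cliqueAt L n, G.Adj a u} := by
    refine ⟨l, ?_⟩
    rintro n ⟨u, ⟨i, hi, -⟩, -⟩
    have := i.2
    omega
  constructor
  · intro h2 h3 v hv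
    have hmem := Nat.sInf_mem hne
    have hmin : ∀ n ∈ {n : ℕ | ∃ u ∈ cliqueAt L n, G.Adj a u}, _ ≤ n := fun n hn => Nat.sInf_le hn
    generalize sInf {n : ℕ | ∃ u ∈ cliqueAt L n, G.Adj a u} = m at *
    obtain ⟨u, ⟨j, hj, hu⟩, hau⟩ := hmem
    obtain ⟨k, hk, hv⟩ := hv
    have hjl := j.2
    obtain ⟨w, hw⟩ := hL.1 ⟨(j : ℕ) - 1, by omega⟩
    by_contra hav
    refine path_aux G hK13 l L hL a ha ⟨(j : ℕ) - 1, by omega⟩ j k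
      (show (j : ℕ) - 1 + 1 = j by omega) (by omega) w u v hw hu hv hau ?_ hav
    intro haw
    have := hmin ((j : ℕ) - 1 + 1) ⟨w, ⟨_, rfl, hw⟩, haw⟩
    omega
  · intro h2 h3 v hv
    have hmem := Nat.sSup_mem hne hbd
    have hmax : ∀ n ∈ {n : ℕ | ∃ u ∈ cliqueAt L n, G.Adj a u}, n ≤ _ := fun n hn => le_csSup hbd hn
    generalize sSup {n : ℕ | ∃ u ∈ cliqueAt L n, G.Adj a u} = m at *
    obtain ⟨u, ⟨j, hj, hu⟩, hau⟩ := hmem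
    obtain ⟨k, hk, hv⟩ := hv
    obtain ⟨w, hw⟩ := hL.1 ⟨(j : ℕ) + 1, by omega⟩
    by_contra hav
    refine path_aux G hK13 l L hL a ha k j ⟨(j : ℕ) + 1, by omega⟩
      (by omega) rfl v u w hv hu hw hau hav ?_
    intro haw
    have := hmax ((j : ℕ) + 1 + 1) ⟨w, ⟨_, rfl, hw⟩, haw⟩
    omega
end
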